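/- arXiv:math/9808087 — 2 statements merged into one kernel-verified Lean document; each statement's English description precedes it below -/
import Mathlib

section
/- For every integer n ≥ 1 there exists a discrete subset D of ℂⁿ such that the only automorphism φ of ℂⁿ satisfying φ(D) = D is the identity map of ℂⁿ. -/
/-!
The set `D` is built so that near each point of the sphere of radius `k + 1`, within a prescribed
distance `ρ k`, it has more points than in the whole ball of radius `k`. Suppose that an
automorphism `φ` with `φ(D) = D` is bounded by `k + 2` on a ball of radius `t ≤ k` and takes some
point well inside that ball to norm `k + 1`. If `φ` of the ball contains a `ρ k`-ball about that
value, then it contains more points of `D` than the ball itself, a contradiction. Such radii `ρ k`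
can be fixed in advance, for all `φ` and all large `k`: since `det φ'` has no zeros, the
Borel–Carathéodory inequality for its logarithm along complex lines bounds it below in terms of
`det φ'(0)`, and a quantitative inverse function theorem applies.

Hence `‖φ z‖ ≤ ‖z‖ + O(1)`, and the Schwarz lemma on large balls gives `‖φ'‖ ≤ 1`. The same holds
for the inverse of `φ`, so `φ` is an isometry. The points of `D` are taken from a dense set in which
the distance of two points determines the pair, so `φ` fixes `D` pointwise, and `D` affinely spans.
-/

open Filter Metric Set Topology
open scoped NNReal

section DifferenceQuotients

variable {𝕜 E G : Type*} [RCLike 𝕜] [NormedAddCommGroup E] [NormedSpace 𝕜 E]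
  [NormedAddCommGroup G] [NormedSpace 𝕜 G]

lemma tendstoLocallyUniformly_difference_quotient {F : E → G} (hF : ContDiff 𝕜 1 F) (v : E) :
    TendstoLocallyUniformly (fun (ε : 𝕜) x => ε⁻¹ • (F (x + ε • v) - F x))
      (fun x => fderiv 𝕜 F x v) (𝓝[≠] 0) := by
  let _ : NormedSpace ℝ E := .restrictScalars ℝ 𝕜 E
  rw [Metric.tendstoLocallyUniformly_iff]
  intro δ hδ a
  obtain ⟨c, hc, hcv⟩ := exists_pos_mul_lt hδ ‖v‖
  obtain ⟨r, hr, hfderiv⟩ : ∃ r > 0, ∀ x ∈ ball a r, dist (fderiv 𝕜 F x) (fderiv 𝕜 F a) < c / 2 :=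
    Metric.continuousAt_iff.1 (hF.continuous_fderiv one_ne_zero).continuousAt _ (half_pos hc)
  have hsmall : ∀ᶠ ε : 𝕜 in 𝓝[≠] 0, ‖ε • v‖ < r / 2 := by
    have : ContinuousAt (fun ε : 𝕜 => ‖ε • v‖) 0 := by fun_prop
    exact (this.eventually_lt_const (by simpa using hr)).filter_mono nhdsWithin_le_nhds
  refine ⟨ball a (r / 2), ball_mem_nhds a (half_pos hr), ?_⟩
  filter_upwards [hsmall, self_mem_nhdsWithin] with ε hε (hε₀ : ε ≠ 0) x hx
  have hxa : dist x a < r / 2 := hx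
  have hsegment : ∀ z ∈ ball x (r / 2), ‖fderiv 𝕜 F z - fderiv 𝕜 F x‖ ≤ c := fun z hz => by
    have hz : dist z x < r / 2 := hz
    have hz' := hfderiv z (by rw [mem_ball]; linarith [dist_triangle z x a])
    have hx' := hfderiv x (by rw [mem_ball]; linarith)
    rw [← dist_eq_norm]
    linarith [dist_triangle_right (fderiv 𝕜 F z) (fderiv 𝕜 F x) (fderiv 𝕜 F a)]
  have hmean : ‖F (x + ε • v) - F x - ε • fderiv 𝕜 F x v‖ ≤ c * ‖ε • v‖ := by
    simpa using (convex_ball x (r / 2)).norm_image_sub_le_of_norm_fderiv_le'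
      (fun z _ => hF.differentiable one_ne_zero z) hsegment
      (mem_ball_self (half_pos hr)) (y := x + ε • v) (by simpa using hε)
  calc dist (fderiv 𝕜 F x v) (ε⁻¹ • (F (x + ε • v) - F x))
      = ‖ε‖⁻¹ * ‖F (x + ε • v) - F x - ε • fderiv 𝕜 F x v‖ := by
        rw [dist_comm, dist_eq_norm, ← norm_inv, ← norm_smul, smul_sub _ _ (ε • _),
          inv_smul_smul₀ hε₀]
    _ ≤ ‖ε‖⁻¹ * (c * ‖ε • v‖) := by gcongr
    _ = ‖v‖ * c := by rw [norm_smul]; field_simp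
    _ < δ := hcv

end DifferenceQuotients

section Cauchy

variable {E G : Type*} [NormedAddCommGroup E] [NormedSpace ℂ E]
  [NormedAddCommGroup G] [NormedSpace ℂ G] {F : E → G} {a x : E} {r M : ℝ}

lemma norm_fderiv_le_of_norm_le_ball (hF : Differentiable ℂ F) (hr : 0 < r)
    (hM : ∀ z ∈ ball a r, ‖F z‖ ≤ M) : ‖fderiv ℂ F a‖ ≤ 2 * M / r := by
  refine Complex.norm_fderiv_le_div_of_mapsTo_ball hF.differentiableOn (fun z hz => ?_) hr
  rw [mem_closedBall, dist_eq_norm]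
  linarith [norm_sub_le (F z) (F a), hM z hz, hM a (mem_ball_self hr)]

lemma norm_fderiv_sub_fderiv_le_of_norm_le_ball (hF : Differentiable ℂ F) (hr : 0 < r)
    (hM : ∀ z ∈ ball a (3 * r), ‖F z‖ ≤ M) (hx : x ∈ ball a r) :
    ‖fderiv ℂ F x - fderiv ℂ F a‖ ≤ 4 * M / r ^ 2 * ‖x - a‖ := by
  let _ : NormedSpace ℝ E := .restrictScalars ℝ ℂ E
  have hfderiv : ∀ u ∈ ball a (2 * r), ‖fderiv ℂ F u‖ ≤ 2 * M / r := fun u hu =>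
    norm_fderiv_le_of_norm_le_ball hF hr fun z hz => hM z <| by
      rw [mem_ball] at *
      linarith [dist_triangle z u a]
  let H : E → G := fun u => F (u + x) - F (u + a)
  have hHbound : ∀ u ∈ ball (0 : E) r, ‖H u‖ ≤ 2 * M / r * ‖x - a‖ := fun u hu => by
    rw [mem_ball_zero_iff] at hu
    rw [mem_ball, dist_eq_norm] at hx
    have hux : u + x ∈ ball a (2 * r) := by
      rw [mem_ball, dist_eq_norm, add_sub_assoc]
      linarith [norm_add_le u (x - a)]
    have hua : u + a ∈ ball a (2 * r) := by
      rw [mem_ball, dist_eq_norm, add_sub_cancel_right]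
      linarith
    simpa using (convex_ball a (2 * r)).norm_image_sub_le_of_norm_fderiv_le
      (fun z _ => hF z) hfderiv hua hux
  have hHfderiv : fderiv ℂ H 0 = fderiv ℂ F x - fderiv ℂ F a := by
    simpa [H, fderiv_comp_add_right] using
      fderiv_fun_sub (𝕜 := ℂ) (f := fun u => F (u + x)) (g := fun u => F (u + a)) (x := 0)
        (by fun_prop) (by fun_prop)
  calc ‖fderiv ℂ F x - fderiv ℂ F a‖
      ≤ 2 * (2 * M / r * ‖x - a‖) / r :=
        hHfderiv ▸ norm_fderiv_le_of_norm_le_ball (by fun_prop : Differentiable ℂ H) hr hHbound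
    _ = 4 * M / r ^ 2 * ‖x - a‖ := by ring

lemma contDiff_one_of_differentiable_complex (hF : Differentiable ℂ F) : ContDiff ℂ 1 F := by
  refine contDiff_one_iff_fderiv.2 ⟨hF, continuous_iff_continuousAt.2 fun a => ?_⟩
  obtain ⟨t, ht, hM⟩ : ∃ t > 0, ∀ z ∈ ball a t, ‖F z‖ < ‖F a‖ + 1 :=
    Metric.eventually_nhds_iff_ball.1 <|
      hF.continuous.norm.continuousAt.eventually_lt_const (lt_add_one _)
  refine continuousAt_of_locally_lipschitz (by positivity : 0 < t / 3)
    (4 * (‖F a‖ + 1) / (t / 3) ^ 2) fun x hx => ?_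
  simpa only [dist_eq_norm] using norm_fderiv_sub_fderiv_le_of_norm_le_ball hF (by positivity)
    (fun z hz => (hM z (by rwa [mul_div_cancel₀ t three_ne_zero] at hz)).le) hx

lemma differentiable_fderiv_smul_apply [CompleteSpace G] (hF : Differentiable ℂ F) (e v : E) :
    Differentiable ℂ fun w : ℂ => fderiv ℂ F (w • e) v := by
  have hlim := (tendstoLocallyUniformly_difference_quotient
    (contDiff_one_of_differentiable_complex hF) v).comp (fun w : ℂ => w • e) (by fun_prop)
  rw [← differentiableOn_univ]
  refine (tendstoLocallyUniformlyOn_univ.2 hlim).differentiableOn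
    (Eventually.of_forall fun ε => Differentiable.differentiableOn ?_) isOpen_univ
  simp only [Function.comp_def]
  fun_prop

end Cauchy

section Determinant

variable {𝕜 E : Type*} [NontriviallyNormedField 𝕜] [NormedAddCommGroup E] [NormedSpace 𝕜 E]

lemma det_fderiv_ne_zero_of_leftInverse {F H : E → E} (hF : Differentiable 𝕜 F)
    (hH : Differentiable 𝕜 H) (hHF : Function.LeftInverse H F) (z : E) :
    (fderiv 𝕜 F z).det ≠ 0 := by
  have hcomp : (fderiv 𝕜 H (F z)).comp (fderiv 𝕜 F z) = ContinuousLinearMap.id 𝕜 E := by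
    rw [← fderiv_comp z (hH _) (hF z), hHF.comp_eq_id, fderiv_id]
  have hdet : (fderiv 𝕜 H (F z)).det * (fderiv 𝕜 F z).det = 1 := by
    have hmul := LinearMap.det_comp (fderiv 𝕜 H (F z) : E →ₗ[𝕜] E) (fderiv 𝕜 F z)
    rw [← ContinuousLinearMap.toLinearMap_comp, hcomp] at hmul
    simpa using hmul.symm
  exact right_ne_zero_of_mul_eq_one hdet

variable {X : Type*} [NormedAddCommGroup X] [NormedSpace 𝕜 X]

lemma differentiable_det_of_forall_apply [CompleteSpace 𝕜] [FiniteDimensional 𝕜 E]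
    {A : X → E →L[𝕜] E} (hA : ∀ v, Differentiable 𝕜 fun x => A x v) :
    Differentiable 𝕜 fun x => (A x).det := by
  let b := Module.finBasis 𝕜 E
  have hdet : ∀ x, (A x).det =
      (Matrix.of fun i j => (b.coord i).toContinuousLinearMap (A x (b j))).det := fun x => by
    rw [ContinuousLinearMap.det, ← LinearMap.det_toMatrix b]
    congr 1
    ext i j
    simp [LinearMap.toMatrix_apply]
  simp only [hdet, Matrix.det_apply, Matrix.of_apply]
  have := fun j => hA (b j)
  fun_prop

end Determinant

section BoundedDeterminant

variable {𝕜 E : Type*} [NontriviallyNormedField 𝕜] [ProperSpace 𝕜]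
  [NormedAddCommGroup E] [NormedSpace 𝕜 E] [FiniteDimensional 𝕜 E]

variable (𝕜 E) in
lemma exists_norm_det_lt (M : ℝ) :
    ∃ K > 0, ∀ A : E →L[𝕜] E, ‖A‖ ≤ M → ‖A.det‖ < K := by
  have : ProperSpace (E →L[𝕜] E) := FiniteDimensional.proper 𝕜 _
  obtain ⟨K, hK⟩ := (isCompact_closedBall (0 : E →L[𝕜] E) M).exists_bound_of_continuousOn
    ContinuousLinearMap.continuous_det.continuousOn
  exact ⟨max K 0 + 1, by positivity, fun A hA =>
    (hK A (by simpa using hA)).trans_lt (by linarith [le_max_left K 0])⟩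

variable (𝕜 E) in
lemma exists_nonlinearRightInverse_of_le_norm_det (M : ℝ) {c : ℝ} (hc : 0 < c) :
    ∃ C : ℝ≥0, 0 < C ∧ ∀ A : E →L[𝕜] E, ‖A‖ ≤ M → c ≤ ‖A.det‖ →
      ∃ B : A.NonlinearRightInverse, B.nnnorm = C := by
  have : ProperSpace (E →L[𝕜] E) := FiniteDimensional.proper 𝕜 _
  have : CompleteSpace E := FiniteDimensional.complete 𝕜 E
  have hequiv : ∀ A : E →L[𝕜] E, c ≤ ‖A.det‖ → ∃ e : E ≃L[𝕜] E, (e : E →L[𝕜] E) = A :=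
    fun A hA => ⟨A.toContinuousLinearEquivOfDetNeZero (norm_pos_iff.1 (hc.trans_le hA)),
      A.coe_toContinuousLinearEquivOfDetNeZero _⟩
  have hcompact : IsCompact (closedBall (0 : E →L[𝕜] E) M ∩ {A | c ≤ ‖A.det‖}) :=
    (isCompact_closedBall _ _).inter_right
      (isClosed_le continuous_const ContinuousLinearMap.continuous_det.norm)
  obtain ⟨C, hC⟩ := hcompact.exists_bound_of_continuousOn (f := ContinuousLinearMap.inverse) <| by
    rintro A ⟨-, hA⟩
    obtain ⟨e, rfl⟩ := hequiv A hA
    exact (contDiffAt_map_inverse (n := 0) e).continuousAt.continuousWithinAt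
  refine ⟨C.toNNReal + 1, by positivity, fun A hA hAc => ?_⟩
  obtain ⟨e, rfl⟩ := hequiv A hAc
  have hesymm : ‖(e.symm : E →L[𝕜] E)‖ ≤ C := by
    simpa using hC e ⟨by simpa using hA, hAc⟩
  refine ⟨⟨e.symm, C.toNNReal + 1, fun y => ?_, e.apply_symm_apply⟩, rfl⟩
  calc ‖e.symm y‖ ≤ ‖(e.symm : E →L[𝕜] E)‖ * ‖y‖ := (e.symm : E →L[𝕜] E).le_opNorm y
    _ ≤ (C.toNNReal + 1 : ℝ≥0) * ‖y‖ := by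
      push_cast
      gcongr
      linarith [Real.le_coe_toNNReal C]

end BoundedDeterminant

section Harnack

variable {f : ℂ → ℂ} {c : ℂ} {ρ : ℝ}

lemma exists_eqOn_ball_mul_exp (hf : DifferentiableOn ℂ f (ball c ρ))
    (hf₀ : ∀ z ∈ ball c ρ, f z ≠ 0) :
    ∃ g : ℂ → ℂ, DifferentiableOn ℂ g (ball c ρ) ∧ g c = 0 ∧
      ∀ z ∈ ball c ρ, f z = f c * Complex.exp (g z) := by
  obtain ⟨g, hgc, hg⟩ := ((hf.deriv isOpen_ball).div hf hf₀).isExactOn_ball.with_val_at c 0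
  have hg' : DifferentiableOn ℂ g (ball c ρ) :=
    fun z hz => (hg z hz).differentiableAt.differentiableWithinAt
  have hlogDeriv : EqOn (logDeriv f) (logDeriv fun z => Complex.exp (g z)) (ball c ρ) :=
    fun z hz => by
      rw [logDeriv_apply, logDeriv_apply, (hg z hz).cexp.deriv,
        mul_div_cancel_left₀ _ (Complex.exp_ne_zero _)]
      rfl
  obtain ⟨a, -, ha⟩ := (logDeriv_eqOn_iff hf hg'.cexp isOpen_ball
    (convex_ball c ρ).isPreconnected (fun _ _ => Complex.exp_ne_zero _) hf₀).1 hlogDeriv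
  refine ⟨g, hg', hgc, fun z hz => ?_⟩
  have hac : f c = a := by
    simpa [hgc] using ha (mem_ball_self (pos_of_mem_ball hz))
  simpa [hac] using ha hz

lemma mul_exp_neg_le_norm_of_mapsTo_ball {M : ℝ} {w : ℂ} (hf : DifferentiableOn ℂ f (ball 0 ρ))
    (hf₀ : ∀ z ∈ ball 0 ρ, f z ≠ 0) (hM : MapsTo f (ball 0 ρ) (ball 0 M)) (hw : w ∈ ball 0 ρ) :
    ‖f 0‖ * Real.exp (-(2 * Real.log (M / ‖f 0‖) * ‖w‖ / (ρ - ‖w‖))) ≤ ‖f w‖ := by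
  have hρ : 0 < ρ := pos_of_mem_ball hw
  obtain ⟨g, hg, hg₀, hfg⟩ := exists_eqOn_ball_mul_exp hf hf₀
  have hnorm : ∀ z ∈ ball 0 ρ, ‖f z‖ = ‖f 0‖ * Real.exp (g z).re := fun z hz => by
    rw [hfg z hz, norm_mul, Complex.norm_exp]
  have hpos : 0 < ‖f 0‖ := norm_pos_iff.2 (hf₀ 0 (mem_ball_self hρ))
  have hlt : ‖f 0‖ < M := by simpa using hM (mem_ball_self hρ)
  have hlog : 0 < Real.log (M / ‖f 0‖) := Real.log_pos ((one_lt_div hpos).2 hlt)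
  have hre : MapsTo g (ball 0 ρ) {z | z.re ≤ Real.log (M / ‖f 0‖)} := fun z hz =>
    (Real.le_log_iff_exp_le (div_pos (hpos.trans hlt) hpos)).2 <| by
      rw [le_div_iff₀' hpos, ← hnorm z hz]
      exact (mem_ball_zero_iff.1 (hM hz)).le
  have hgw := Complex.borelCaratheodory_zero hlog hg hre hρ hw hg₀
  rw [hnorm w hw]
  gcongr
  linarith [neg_abs_le (g w).re, Complex.abs_re_le_norm (g w)]

end Harnack

section InverseFunction

variable {𝕜 E G : Type*} [RCLike 𝕜] [NormedAddCommGroup E] [NormedSpace 𝕜 E] [CompleteSpace E]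
  [NormedAddCommGroup G] [NormedSpace 𝕜 G]

lemma surjOn_closedBall_of_norm_fderiv_sub_le {F : E → G} {f' : E →L[𝕜] G}
    (B : f'.NonlinearRightInverse) {z : E} {ε : ℝ} {c : ℝ≥0} (hε : 0 ≤ ε)
    (hF : ∀ x ∈ closedBall z ε, DifferentiableAt 𝕜 F x)
    (hc : ∀ x ∈ closedBall z ε, ‖fderiv 𝕜 F x - f'‖ ≤ c) :
    SurjOn F (closedBall z ε) (closedBall (F z) (((B.nnnorm : ℝ)⁻¹ - c) * ε)) := by
  let _ : NormedSpace ℝ E := .restrictScalars ℝ 𝕜 E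
  have happrox : ApproximatesLinearOn F f' (closedBall z ε) c := fun x hx y hy =>
    (convex_closedBall z ε).norm_image_sub_le_of_norm_fderiv_le' hF hc hy hx
  exact happrox.surjOn_closedBall_of_nonlinearRightInverse B hε Subset.rfl

end InverseFunction

/-- On each ball about `0` of radius `t ≤ T` on which `F` is bounded by `M`, the image of `F`
contains the `ρ`-balls about the values of `F` at the points at depth at least `η` in that ball. -/
def CoversBalls {E : Type*} [NormedAddCommGroup E] (F : E → E) (T M η ρ : ℝ) : Prop :=
  ∀ t ≤ T, (∀ z ∈ ball 0 t, ‖F z‖ ≤ M) → ∀ z, ‖z‖ + η ≤ t → ball (F z) ρ ⊆ F '' ball 0 t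

section Covering

variable {E : Type*} [NormedAddCommGroup E] [NormedSpace ℂ E]

lemma norm_fderiv_le_of_norm_add_le {G : Type*} [NormedAddCommGroup G] [NormedSpace ℂ G]
    {F : E → G} (hF : Differentiable ℂ F) {t M η : ℝ} (hη : 0 < η)
    (hM : ∀ z ∈ ball 0 t, ‖F z‖ ≤ M) {z : E} (hz : ‖z‖ + η ≤ t) :
    ‖fderiv ℂ F z‖ ≤ 2 * M / η :=
  norm_fderiv_le_of_norm_le_ball hF hη fun u hu => hM u <|
    ball_subset_ball' (by rwa [dist_zero_right, add_comm]) hu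

variable [FiniteDimensional ℂ E]

variable (E) in
lemma exists_le_norm_det_fderiv (T M : ℝ) {η δ : ℝ} (hη : 0 < η) (hδ : 0 < δ) :
    ∃ c > 0, ∀ F : E → E, Differentiable ℂ F → (∀ z, (fderiv ℂ F z).det ≠ 0) →
      δ ≤ ‖(fderiv ℂ F 0).det‖ → ∀ t ≤ T, (∀ z ∈ ball 0 t, ‖F z‖ ≤ M) →
      ∀ z, ‖z‖ + η ≤ t → c ≤ ‖(fderiv ℂ F z).det‖ := by
  have : CompleteSpace E := FiniteDimensional.complete ℂ E
  obtain ⟨K, hK, hdetK⟩ := exists_norm_det_lt ℂ E (2 * M / (η / 2))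
  refine ⟨δ * Real.exp (-(2 * Real.log (K / δ) * T / (η / 2))), by positivity,
    fun F hF hF₀ hδF t htT hM z hz => ?_⟩
  have hnorm : ‖((‖z‖ : ℝ) : ℂ)‖ = ‖z‖ := by simp
  obtain ⟨e, he, hze⟩ : ∃ e : E, ‖e‖ ≤ 1 ∧ (‖z‖ : ℂ) • e = z := by
    rcases eq_or_ne z 0 with rfl | hz₀
    · exact ⟨0, by simp⟩
    · exact ⟨(‖z‖ : ℂ)⁻¹ • z, by simp [norm_smul, hz₀], smul_inv_smul₀ (by simpa using hz₀) z⟩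
  let f : ℂ → ℂ := fun w => (fderiv ℂ F (w • e)).det
  have hf : Differentiable ℂ f :=
    differentiable_det_of_forall_apply fun v => differentiable_fderiv_smul_apply hF e v
  have hfK : MapsTo f (ball 0 (t - η / 2)) (ball 0 K) := fun w hw => by
    rw [mem_ball_zero_iff] at hw ⊢
    refine hdetK _ (norm_fderiv_le_of_norm_add_le hF (half_pos hη) hM ?_)
    rw [norm_smul]
    nlinarith [norm_nonneg w]
  have hf0 : δ ≤ ‖f 0‖ := by simpa [f] using hδF
  have hpos : 0 < ‖f 0‖ := hδ.trans_le hf0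
  have hlt : ‖f 0‖ < K := by
    simpa using hfK (mem_ball_self (by linarith [norm_nonneg z] : 0 < t - η / 2))
  have hlog : 0 ≤ Real.log (K / δ) := Real.log_nonneg ((one_le_div hδ).2 (hf0.trans hlt.le))
  have hlogT : 0 ≤ 2 * Real.log (K / δ) * T :=
    mul_nonneg (by linarith) (by linarith [norm_nonneg z])
  calc δ * Real.exp (-(2 * Real.log (K / δ) * T / (η / 2)))
      ≤ ‖f 0‖ * Real.exp (-(2 * Real.log (K / ‖f 0‖) * ‖z‖ / (t - η / 2 - ‖z‖))) := by
        gcongr <;> linarith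
    _ ≤ ‖f ‖z‖‖ := by
        simpa only [hnorm] using mul_exp_neg_le_norm_of_mapsTo_ball (w := ‖z‖) hf.differentiableOn
          (fun w _ => hF₀ _) hfK (by rw [mem_ball_zero_iff, hnorm]; linarith)
    _ = ‖(fderiv ℂ F z).det‖ := by simp only [f, hze]

variable (E) in
lemma exists_coversBalls (T M : ℝ) {η δ : ℝ} (hη : 0 < η) (hδ : 0 < δ) :
    ∃ ρ > 0, ∀ F : E → E, Differentiable ℂ F → (∀ z, (fderiv ℂ F z).det ≠ 0) →
      δ ≤ ‖(fderiv ℂ F 0).det‖ → CoversBalls F T M η ρ := by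
  have : CompleteSpace E := FiniteDimensional.complete ℂ E
  obtain ⟨c, hc, hdet⟩ := exists_le_norm_det_fderiv E T M hη hδ
  obtain ⟨C, hC, hinverse⟩ := exists_nonlinearRightInverse_of_le_norm_det ℂ E (2 * M / η) hc
  obtain ⟨ε, hε, hεη, hεC⟩ :
      ∃ ε > 0, ε < η / 3 ∧ 4 * M / (η / 3) ^ 2 * ε ≤ ((2 * C)⁻¹ : ℝ≥0) := by
    have hlim : Tendsto (fun ε => 4 * M / (η / 3) ^ 2 * ε) (𝓝 0) (𝓝 0) :=
      Continuous.tendsto' (by fun_prop) _ _ (mul_zero _)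
    have hC' : (0 : ℝ) < ((2 * C)⁻¹ : ℝ≥0) := by positivity
    have := ((gt_mem_nhds (by positivity : 0 < η / 3)).and
      (hlim.eventually_le_const hC')).filter_mono (nhdsWithin_le_nhds (s := Ioi 0))
    obtain ⟨ε, h, hε⟩ := (this.and self_mem_nhdsWithin).exists
    exact ⟨ε, hε, h⟩
  refine ⟨(2 * C)⁻¹ * ε, by positivity, fun F hF hF₀ hδF t htT hM z hz => ?_⟩
  have hball : ball z (3 * (η / 3)) ⊆ ball 0 t :=
    ball_subset_ball' (by rw [dist_zero_right]; linarith)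
  obtain ⟨B, hB⟩ := hinverse (fderiv ℂ F z) (norm_fderiv_le_of_norm_add_le hF hη hM hz)
    (hdet F hF hF₀ hδF t htT hM z hz)
  have hM₀ : 0 ≤ M := (norm_nonneg _).trans (hM z (hball (mem_ball_self (by positivity))))
  have hfderiv : ∀ x ∈ closedBall z ε, ‖fderiv ℂ F x - fderiv ℂ F z‖ ≤ ((2 * C)⁻¹ : ℝ≥0) := by
    intro x hx
    refine (norm_fderiv_sub_fderiv_le_of_norm_le_ball hF (by positivity)
      (fun u hu => hM u (hball hu)) (closedBall_subset_ball hεη hx)).trans (le_trans ?_ hεC)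
    gcongr
    simpa [dist_eq_norm] using hx
  have hsurj := surjOn_closedBall_of_norm_fderiv_sub_le B hε.le (fun x _ => hF x) hfderiv
  have hradius : (B.nnnorm : ℝ)⁻¹ - ((2 * C)⁻¹ : ℝ≥0) = (2 * C)⁻¹ := by
    rw [hB]
    push_cast
    field_simp
    norm_num
  rw [hradius] at hsurj
  refine (ball_subset_closedBall.trans hsurj).trans (image_mono ?_)
  exact (closedBall_subset_ball (by linarith)).trans hball

variable (E) in
lemma exists_radii_eventually_coversBalls {T M η : ℕ → ℝ} (hη : ∀ k, 0 < η k) :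
    ∃ ρ : ℕ → ℝ, (∀ k, 0 < ρ k) ∧ ∀ F : E → E, Differentiable ℂ F →
      (∀ z, (fderiv ℂ F z).det ≠ 0) → ∀ᶠ k in atTop, CoversBalls F (T k) (M k) (η k) (ρ k) := by
  choose ρ hρ hcovers using fun k : ℕ =>
    exists_coversBalls E (T k) (M k) (hη k) (Nat.one_div_pos_of_nat (α := ℝ) (n := k))
  refine ⟨ρ, hρ, fun F hF hF₀ => ?_⟩
  filter_upwards [tendsto_one_div_add_atTop_nhds_zero_nat.eventually_le_const
    (norm_pos_iff.2 (hF₀ 0))] with k hk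
  exact hcovers k F hF hF₀ hk

end Covering

section DiscreteSets

/-- Near each point of the sphere of radius `k + 1`, within distance `ρ k`, the set `D` has more
points than in the whole closed ball of radius `k` about `0`. -/
def OutnumbersBalls {E : Type*} [NormedAddCommGroup E] (ρ : ℕ → ℝ) (D : Set E) : Prop :=
  ∀ (k : ℕ) (y : E), ‖y‖ = k + 1 → (D ∩ closedBall 0 k).encard < (D ∩ ball y (ρ k)).encard

lemma infinite_inter_of_dense_of_isOpen {X : Type*} [TopologicalSpace X] [T1Space X]
    [∀ x : X, (𝓝[≠] x).NeBot] {Q U : Set X} (hQ : Dense Q) (hU : IsOpen U) (hne : U.Nonempty) :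
    (Q ∩ U).Infinite := fun hfin =>
  let ⟨_, hxU, hxQ, hx⟩ := (hQ.sdiff_finite hfin).inter_open_nonempty U hU hne
  hx ⟨hxQ, hxU⟩

lemma isClosed_and_discreteTopology_of_finite_inter_closedBall {X : Type*} [MetricSpace X]
    {D : Set X} (x₀ : X) (hD : ∀ k : ℕ, (D ∩ closedBall x₀ k).Finite) :
    IsClosed D ∧ DiscreteTopology D := by
  rw [← isDiscrete_iff_discreteTopology, isClosed_and_discrete_iff]
  intro x
  obtain ⟨k, hk⟩ := exists_nat_gt (dist x x₀)
  have hball : ball x₀ k ∈ 𝓝 x := isOpen_ball.mem_nhds hk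
  have hcompl : ((D ∩ closedBall x₀ k) \ {x})ᶜ ∈ 𝓝 x :=
    ((hD k).subset sdiff_subset).isClosed.isOpen_compl.mem_nhds fun h => h.2 rfl
  rw [disjoint_principal_right]
  filter_upwards [nhdsWithin_le_nhds hball, nhdsWithin_le_nhds hcompl, self_mem_nhdsWithin]
    with y hy hy' hyx hyD
  exact hy' ⟨⟨hyD, ball_subset_closedBall hy⟩, hyx⟩

lemma iUnion_inter_closedBall_subset {E : Type*} [SeminormedAddGroup E] {A : ℕ → Set E}
    (hmono : Monotone A) (hA : ∀ (k : ℕ), ∀ x ∈ A (k + 1), x ∈ A k ∨ k < ‖x‖) (k : ℕ) :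
    (⋃ j, A j) ∩ closedBall 0 k ⊆ A k := by
  rintro x ⟨hx, hxk⟩
  rw [mem_closedBall_zero_iff] at hxk
  obtain ⟨j, hj⟩ := mem_iUnion.1 hx
  induction j with
  | zero => exact hmono k.zero_le hj
  | succ j ih =>
    rcases le_or_gt (j + 1) k with hjk | hkj
    · exact hmono hjk hj
    · have hkj : (k : ℝ) ≤ j := by exact_mod_cast Nat.lt_succ_iff.1 hkj
      exact ih ((hA j x hj).resolve_right (by linarith))

variable {E : Type*} [NormedAddCommGroup E] [NormedSpace ℝ E] [FiniteDimensional ℝ E]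
  [Nontrivial E] {Q : Set E}

lemma exists_finset_lt_encard_inter_ball (hQ : Dense Q) {r R ρ : ℝ} (hr : r < R) (hρ : 0 < ρ)
    (N : ℕ) :
    ∃ S : Finset E, ↑S ⊆ Q ∧ (∀ x ∈ S, r < ‖x‖) ∧
      ∀ y, ‖y‖ = R → N < ((S : Set E) ∩ ball y ρ).encard := by
  classical
  have : ProperSpace E := FiniteDimensional.proper ℝ E
  obtain ⟨ε, hε, hεlt⟩ := exists_between (lt_min (half_pos hρ) (sub_pos.2 hr))
  obtain ⟨hερ, hεr⟩ := lt_min_iff.1 hεlt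
  have hpts (p : E) : ∃ T : Finset E, ↑T ⊆ Q ∩ ball p ε ∧ T.card = N + 1 :=
    (infinite_inter_of_dense_of_isOpen hQ isOpen_ball
      ⟨p, mem_ball_self hε⟩).exists_subset_card_eq (N + 1)
  choose T hT hTcard using hpts
  obtain ⟨P, hP, hcover⟩ := (isCompact_sphere (0 : E) R).elim_nhds_subcover
    (fun p => ball p (ρ / 2)) fun p _ => ball_mem_nhds p (half_pos hρ)
  refine ⟨P.biUnion T, ?_, fun x hx => ?_, fun y hy => ?_⟩
  · simpa using fun p _ => (hT p).trans inter_subset_left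
  · obtain ⟨p, hp, hx⟩ := Finset.mem_biUnion.1 hx
    have hpR : ‖p‖ = R := by simpa using hP p hp
    have hxp : ‖x - p‖ < ε := mem_ball_iff_norm.1 (hT p hx).2
    linarith [norm_sub_norm_le p x, norm_sub_rev x p]
  · obtain ⟨p, hp, hyp⟩ := mem_iUnion₂.1 (hcover (mem_sphere_zero_iff_norm.2 hy))
    have hTsub : (T p : Set E) ⊆ ↑(P.biUnion T) ∩ ball y ρ := fun x hx =>
      ⟨Finset.subset_biUnion_of_mem T hp hx, (dist_triangle_right x y p).trans_lt
        (by linarith [mem_ball.1 (hT p hx).2, mem_ball.1 hyp])⟩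
    calc (N : ℕ∞) < (T p).card := by rw [hTcard]; exact_mod_cast N.lt_succ_self
      _ = (T p : Set E).encard := (encard_coe_eq_coe_finsetCard _).symm
      _ ≤ _ := encard_le_encard hTsub

lemma exists_outnumbersBalls (hQ : Dense Q) {A₀ : Finset E} (hA₀ : ↑A₀ ⊆ Q) {ρ : ℕ → ℝ}
    (hρ : ∀ k, 0 < ρ k) :
    ∃ D, ↑A₀ ⊆ D ∧ D ⊆ Q ∧ (∀ k : ℕ, (D ∩ closedBall 0 k).Finite) ∧ OutnumbersBalls ρ D := by
  classical
  choose S hSQ hSnorm hS using fun k N : ℕ =>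
    exists_finset_lt_encard_inter_ball hQ (lt_add_one (k : ℝ)) (hρ k) N
  obtain ⟨A, rfl, hA⟩ : ∃ A : ℕ → Finset E, A 0 = A₀ ∧ ∀ k, A (k + 1) = A k ∪ S k (A k).card :=
    ⟨fun k => Nat.rec A₀ (fun k B => B ∪ S k B.card) k, rfl, fun _ => rfl⟩
  have hmono : Monotone A :=
    monotone_nat_of_le_succ fun k => (hA k).symm ▸ Finset.subset_union_left
  have hAQ (k : ℕ) : (A k : Set E) ⊆ Q := by
    induction k with
    | zero => exact hA₀
    | succ k ih => rw [hA, Finset.coe_union]; exact union_subset ih (hSQ _ _)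
  have hball : ∀ k : ℕ, (⋃ j, (A j : Set E)) ∩ closedBall 0 k ⊆ A k :=
    iUnion_inter_closedBall_subset (SetLike.coe_mono.comp hmono) fun k x hx =>
      (Finset.mem_union.1 (hA k ▸ Finset.mem_coe.1 hx)).imp_right (hSnorm _ _ x)
  refine ⟨⋃ k, (A k : Set E), subset_iUnion (fun k => (A k : Set E)) 0, iUnion_subset hAQ,
    fun k => (A k).finite_toSet.subset (hball k), fun k y hy => ?_⟩
  have hSD : (S k (A k).card : Set E) ⊆ ⋃ j, (A j : Set E) :=
    subset_iUnion_of_subset (k + 1)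
      (Finset.coe_subset.2 ((hA k).symm ▸ Finset.subset_union_right))
  calc _ ≤ (A k : Set E).encard := encard_le_encard (hball k)
    _ = (A k).card := encard_coe_eq_coe_finsetCard _
    _ < ((S k (A k).card : Set E) ∩ ball y (ρ k)).encard := hS _ _ y hy
    _ ≤ _ := encard_le_encard (inter_subset_inter_left _ hSD)

end DiscreteSets

section Growth

lemma encard_inter_image_of_image_eq {α : Type*} {φ : α → α} (hφ : Function.Injective φ)
    {D : Set α} (hD : φ '' D = D) (U : Set α) : (D ∩ φ '' U).encard = (D ∩ U).encard := by
  rw [← hφ.encard_image (D ∩ U), image_inter hφ, hD]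

section Real

variable {E : Type*} [NormedAddCommGroup E] [NormedSpace ℝ E] {φ : E → E} {D : Set E}
  {ρ η : ℕ → ℝ} {k : ℕ}

lemma exists_norm_le_and_norm_eq_of_continuous {G : Type*} [SeminormedAddCommGroup G] {f : E → G}
    (hf : Continuous f) {z : E} {c : ℝ} (h₀ : ‖f 0‖ ≤ c) (hz : c ≤ ‖f z‖) :
    ∃ w, ‖w‖ ≤ ‖z‖ ∧ ‖f w‖ = c := by
  obtain ⟨w, hw, hwc⟩ := (convex_closedBall (0 : E) ‖z‖).isPreconnected.intermediate_value
    (by simp) (by simp) hf.norm.continuousOn ⟨h₀, hz⟩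
  exact ⟨w, mem_closedBall_zero_iff.1 hw, hwc⟩

lemma OutnumbersBalls.norm_map_le (hD : OutnumbersBalls ρ D) (hφ : Continuous φ)
    (hinj : Function.Injective φ) (himg : φ '' D = D)
    (hcover : CoversBalls φ k (k + 2) (η k) (ρ k)) (h₀ : ‖φ 0‖ ≤ k + 1) {t : ℝ} (htk : t ≤ k)
    (hbound : ∀ z ∈ ball 0 t, ‖φ z‖ ≤ k + 2) {z : E} (hz : ‖z‖ + η k ≤ t) : ‖φ z‖ ≤ k + 1 := by
  -- Otherwise some `w` in `ball 0 t` is mapped to the sphere of radius `k + 1`, so the image of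
  -- `ball 0 t` contains `ball (φ w) (ρ k)` and thus more points of `D` than `ball 0 t` does.
  by_contra! hlt
  obtain ⟨w, hwz, hw⟩ := exists_norm_le_and_norm_eq_of_continuous hφ h₀ hlt.le
  refine (hD k (φ w) hw).not_ge ?_
  calc (D ∩ ball (φ w) (ρ k)).encard
      ≤ (D ∩ φ '' ball 0 t).encard :=
        encard_le_encard (inter_subset_inter_right D (hcover t htk hbound w (by linarith)))
    _ = (D ∩ ball 0 t).encard := encard_inter_image_of_image_eq hinj himg _
    _ ≤ (D ∩ closedBall 0 k).encard := encard_le_encard <| inter_subset_inter_right D <|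
        (ball_subset_ball htk).trans ball_subset_closedBall

lemma OutnumbersBalls.norm_map_le_of_forall_ge [ProperSpace E] (hD : OutnumbersBalls ρ D)
    (hφ : Continuous φ) (hinj : Function.Injective φ) (himg : φ '' D = D)
    (hcover : ∀ i ≥ k, CoversBalls φ i (i + 2) ((1 / 2) ^ i) (ρ i)) (h₀ : ‖φ 0‖ ≤ k + 1) {z : E}
    (hz : z ∈ ball 0 ((k : ℝ) - 2)) : ‖φ z‖ ≤ k + 1 := by
  -- Downward induction on `i`: `φ` is bounded on `closedBall 0 k`, which gives `P i` for large `i`.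
  let P (i : ℕ) : Prop := ∀ z ∈ ball (0 : E) (k - 2 * (1 / 2) ^ i), ‖φ z‖ ≤ i + 1
  obtain ⟨M, hM⟩ := (isCompact_closedBall (0 : E) k).exists_bound_of_continuousOn hφ.continuousOn
  obtain ⟨m, hMm⟩ := exists_nat_ge M
  have hstart : P (max k m) := fun z hz => by
    have hmz : z ∈ closedBall 0 (k : ℝ) :=
      ball_subset_closedBall (ball_subset_ball (sub_le_self _ (by positivity)) hz)
    have hm : (m : ℝ) ≤ (max k m : ℕ) := by exact_mod_cast le_max_right k m
    linarith [hM z hmz]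
  have hstep (i : ℕ) (hki : k ≤ i) (hi : P (i + 1)) : P i := fun z hz => by
    have hki' : (k : ℝ) ≤ i := by exact_mod_cast hki
    have hpow : (0 : ℝ) < (1 / 2) ^ i := by positivity
    rw [mem_ball_zero_iff] at hz
    refine hD.norm_map_le hφ hinj himg (hcover i hki) (by linarith) (t := k - (1 / 2) ^ i)
      (by linarith) (fun w hw => ?_) (by linarith)
    have hiw := hi w (by rwa [pow_succ, mul_one_div, mul_div_cancel₀ _ two_ne_zero])
    push_cast at hiw
    linarith
  have hPk : P k := Nat.decreasingInduction' (fun i _ => hstep i) (le_max_left k m) hstart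
  refine hPk z (ball_subset_ball ?_ hz)
  linarith [pow_le_one₀ (n := k) (by norm_num : (0 : ℝ) ≤ 1 / 2) (by norm_num)]

end Real

variable {E G : Type*} [NormedAddCommGroup E] [NormedSpace ℂ E] [NormedAddCommGroup G]
  [NormedSpace ℂ G]

lemma lipschitzWith_one_of_eventually_norm_le {φ : E → G} (hφ : Differentiable ℂ φ) (a b : ℝ)
    (h : ∀ᶠ k : ℕ in atTop, ∀ z ∈ ball 0 (k - a), ‖φ z‖ ≤ k + b) : LipschitzWith 1 φ := by
  refine lipschitzWith_of_nnnorm_fderiv_le hφ fun c => NNReal.coe_le_coe.1 ?_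
  have hlim : Tendsto (fun k : ℕ => (b + ‖φ c‖ + 1 * k) / (-a - ‖c‖ + 1 * k)) atTop
      (𝓝 (1 / 1)) := tendsto_add_mul_div_add_mul_atTop_nhds _ _ _ one_ne_zero
  rw [div_one] at hlim
  refine ge_of_tendsto hlim ?_
  filter_upwards [h, tendsto_natCast_atTop_atTop.eventually_gt_atTop (a + ‖c‖)] with k hk hkc
  refine Complex.norm_fderiv_le_div_of_mapsTo_ball hφ.differentiableOn (fun z hz => ?_)
    (by linarith)
  rw [mem_ball_iff_norm] at hz
  have hφz := hk z (by rw [mem_ball_zero_iff]; linarith [norm_le_norm_sub_add z c])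
  rw [mem_closedBall_iff_norm]
  linarith [norm_sub_le (φ z) (φ c)]

variable [FiniteDimensional ℂ E] [Nontrivial E]

lemma exists_isClosed_discreteTopology_forall_lipschitzWith_one {Q : Set E} (hQ : Dense Q)
    {A : Finset E} (hA : ↑A ⊆ Q) :
    ∃ D : Set E, ↑A ⊆ D ∧ D ⊆ Q ∧ IsClosed D ∧ DiscreteTopology D ∧
      ∀ φ ψ : E → E, Differentiable ℂ φ → Differentiable ℂ ψ → Function.LeftInverse ψ φ →
        φ '' D = D → LipschitzWith 1 φ := by
  have : FiniteDimensional ℝ E := FiniteDimensional.complexToReal E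
  have : ProperSpace E := FiniteDimensional.proper ℂ E
  obtain ⟨ρ, hρ, hcover⟩ := exists_radii_eventually_coversBalls E (T := fun k => k)
    (M := fun k => k + 2) (η := fun k => (1 / 2) ^ k) fun k => by positivity
  obtain ⟨D, hAD, hDQ, hfin, hD⟩ := exists_outnumbersBalls hQ hA hρ
  obtain ⟨hclosed, hdiscrete⟩ := isClosed_and_discreteTopology_of_finite_inter_closedBall 0 hfin
  refine ⟨D, hAD, hDQ, hclosed, hdiscrete, fun φ ψ hφ hψ hψφ himg => ?_⟩
  have hcoverφ := hcover φ hφ (det_fderiv_ne_zero_of_leftInverse hφ hψ hψφ)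
  refine lipschitzWith_one_of_eventually_norm_le hφ 2 1 ?_
  filter_upwards [eventually_forall_ge_atTop.2 hcoverφ,
    tendsto_natCast_atTop_atTop.eventually_ge_atTop ‖φ 0‖] with k hk hk₀ z hz
  exact hD.norm_map_le_of_forall_ge hφ.continuous hψφ.injective himg hk (by linarith) hz

end Growth

section DistinctDistances

/-- The distance of two distinct points of `S` determines the pair, an element of `Sym2 X`. Since
`c = d` is allowed below, distinct points have nonzero distance. -/
def HasDistinctDists {X : Type*} [PseudoMetricSpace X] (S : Set X) : Prop :=
  ∀ ⦃a⦄, a ∈ S → ∀ ⦃b⦄, b ∈ S → ∀ ⦃c⦄, c ∈ S → ∀ ⦃d⦄, d ∈ S →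
    a ≠ b → dist a b = dist c d → s(a, b) = s(c, d)

namespace HasDistinctDists

section PseudoMetric

variable {X : Type*} [PseudoMetricSpace X] {S T : Set X}

lemma mono (hT : HasDistinctDists T) (hST : S ⊆ T) : HasDistinctDists S :=
  fun _ ha _ hb _ hc _ hd => hT (hST ha) (hST hb) (hST hc) (hST hd)

lemma insert_of_dist_ne (hS : HasDistinctDists S) {x : X}
    (hne : ∀ p ∈ S, ∀ q ∈ S, ∀ r ∈ S, dist x p ≠ dist q r)
    (hinj : InjOn (dist x) S) : HasDistinctDists (insert x S) := by
  have hne₀ (p) (hp : p ∈ S) : dist x p ≠ 0 := dist_self p ▸ hne p hp p hp p hp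
  rintro a (rfl | ha) b (rfl | hb) c (rfl | hc) d (rfl | hd) hab h
  all_goals grind [dist_comm, dist_self, InjOn, Sym2.eq_swap, HasDistinctDists]

lemma iUnion_of_directed {ι : Type*} [Nonempty ι] {S : ι → Set X} (hdir : Directed (· ⊆ ·) S)
    (hS : ∀ i, HasDistinctDists (S i)) : HasDistinctDists (⋃ i, S i) := by
  classical
  intro a ha b hb c hc d hd
  obtain ⟨i, hi⟩ := hdir.exists_mem_subset_of_finset_subset_biUnion (s := {a, b, c, d})
    (by simp [insert_subset_iff, ha, hb, hc, hd])
  simp only [Finset.coe_insert, Finset.coe_singleton, insert_subset_iff, singleton_subset_iff]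
    at hi
  exact hS i hi.1 hi.2.1 hi.2.2.1 hi.2.2.2

lemma eq_of_isometry (hS : HasDistinctDists S) {φ : X → X} (hφ : Isometry φ) (hmaps : MapsTo φ S S)
    (hthree : 2 < S.encard) {x : X} (hx : x ∈ S) : φ x = x := by
  have hcard : 1 < (S \ {x}).encard := by
    rw [← encard_sdiff_singleton_add_one hx, ← one_add_one_eq_two] at hthree
    exact lt_of_add_lt_add_right hthree
  obtain ⟨y, z, ⟨hy, hyx⟩, ⟨hz, hzx⟩, hyz⟩ := one_lt_encard_iff.1 hcard
  have hxy : s(x, y) = s(φ x, φ y) :=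
    hS hx hy (hmaps hx) (hmaps hy) (Ne.symm hyx) (hφ.dist_eq x y).symm
  have hxz : s(x, z) = s(φ x, φ z) :=
    hS hx hz (hmaps hx) (hmaps hz) (Ne.symm hzx) (hφ.dist_eq x z).symm
  grind

end PseudoMetric

lemma exists_insert {E : Type*} [NormedAddCommGroup E] [InnerProductSpace ℝ E]
    [FiniteDimensional ℝ E] [Nontrivial E] {S U : Set E} (hS : HasDistinctDists S)
    (hfin : S.Finite) (hU : IsOpen U) (hne : U.Nonempty) :
    ∃ x ∈ U, HasDistinctDists (insert x S) := by
  let _ : MeasurableSpace E := borel E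
  have : BorelSpace E := ⟨rfl⟩
  let μ : MeasureTheory.Measure E := MeasureTheory.Measure.addHaar
  let spheres : Set E := ⋃ p ∈ S, ⋃ q ∈ S, ⋃ r ∈ S, sphere p (dist q r)
  let bisectors : Set E := ⋃ p ∈ S, ⋃ q ∈ S \ {p}, AffineSubspace.perpBisector p q
  have hspheres : μ spheres = 0 := by
    simp only [spheres, MeasureTheory.measure_biUnion_null_iff hfin.countable]
    exact fun p _ q _ r _ => MeasureTheory.Measure.addHaar_sphere μ _ _
  have hbisectors : μ bisectors = 0 := by
    simp only [bisectors, MeasureTheory.measure_biUnion_null_iff hfin.countable,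
      MeasureTheory.measure_biUnion_null_iff (hfin.countable.mono sdiff_subset)]
    exact fun p _ q hq => MeasureTheory.Measure.addHaar_affineSubspace μ _
      (AffineSubspace.perpBisector_eq_top.not.2 (Ne.symm hq.2))
  obtain ⟨x, hxU, hx⟩ : ∃ x ∈ U, x ∉ spheres ∪ bisectors :=
    not_subset.1 fun hsub => (hU.measure_pos μ hne).ne' <|
      MeasureTheory.measure_mono_null hsub (MeasureTheory.measure_union_null hspheres hbisectors)
  simp only [spheres, bisectors, mem_union, mem_iUnion, not_or, not_exists, mem_sphere] at hx
  refine ⟨x, hxU, hS.insert_of_dist_ne hx.1 fun p hp q hq hpq => ?_⟩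
  by_contra hne
  exact hx.2 p hp q ⟨hq, Ne.symm hne⟩ (AffineSubspace.mem_perpBisector_iff_dist_eq.2 hpq)

end HasDistinctDists

lemma exists_monotone_dense_iUnion {X : Type*} [TopologicalSpace X] [SecondCountableTopology X]
    [Nonempty X] {P : Set X → Prop} (h₀ : P ∅)
    (hP : ∀ S, S.Finite → P S → ∀ U, IsOpen U → U.Nonempty → ∃ x ∈ U, P (insert x S)) :
    ∃ S : ℕ → Set X, Monotone S ∧ (∀ k, P (S k)) ∧ Dense (⋃ k, S k) := by
  obtain ⟨b, hbc, hb₀, hb⟩ := TopologicalSpace.exists_countable_basis X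
  have hbne : b.Nonempty := nonempty_iff_ne_empty.2 fun h =>
    empty_ne_univ (by simpa [h] using hb.sUnion_eq)
  obtain ⟨u, rfl⟩ := hbc.exists_eq_range hbne
  have hu (k : ℕ) : (u k).Nonempty := nonempty_iff_ne_empty.2 fun h => hb₀ (h ▸ mem_range_self k)
  choose x hxu hx using fun (k : ℕ) (S : {S : Set X // S.Finite ∧ P S}) =>
    hP S S.2.1 S.2.2 (u k) (hb.isOpen (mem_range_self k)) (hu k)
  obtain ⟨S, hS⟩ : ∃ S : ℕ → {S : Set X // S.Finite ∧ P S},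
      ∀ k, (S (k + 1)).1 = insert (x k (S k)) (S k).1 :=
    ⟨fun k => Nat.rec ⟨∅, finite_empty, h₀⟩ (fun k S => ⟨_, S.2.1.insert _, hx k S⟩) k,
      fun _ => rfl⟩
  refine ⟨fun k => S k, monotone_nat_of_le_succ fun k => hS k ▸ subset_insert _ _,
    fun k => (S k).2.2, hb.dense_iff.2 ?_⟩
  rintro _ ⟨k, rfl⟩ -
  exact ⟨x k (S k), hxu k (S k), mem_iUnion.2 ⟨k + 1, hS k ▸ mem_insert _ _⟩⟩

lemma exists_dense_hasDistinctDists (E : Type*) [NormedAddCommGroup E] [InnerProductSpace ℝ E]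
    [FiniteDimensional ℝ E] [Nontrivial E] : ∃ Q : Set E, Dense Q ∧ HasDistinctDists Q := by
  have : ProperSpace E := FiniteDimensional.proper ℝ E
  obtain ⟨S, hmono, hS, hdense⟩ := exists_monotone_dense_iUnion (X := E) (P := HasDistinctDists)
    (fun _ ha => ha.elim) fun _ hfin hS _ => hS.exists_insert hfin
  exact ⟨⋃ k, S k, hdense, .iUnion_of_directed hmono.directed_le hS⟩

end DistinctDistances

section AffineSpan

lemma eq_id_of_isometry_of_affineSpan_eq_top {V P : Type*} [NormedAddCommGroup V]
    [InnerProductSpace ℝ V] [MetricSpace P] [NormedAddTorsor V P] {φ : P → P} (hφ : Isometry φ)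
    {D : Set P} (hD : affineSpan ℝ D = ⊤) (hfix : ∀ d ∈ D, φ d = d) : φ = id := by
  funext x
  have hsub : D ⊆ AffineSubspace.perpBisector (φ x) x := fun d hd => by
    rw [SetLike.mem_coe, AffineSubspace.mem_perpBisector_iff_dist_eq', ← hφ.dist_eq x d, hfix d hd]
  exact AffineSubspace.perpBisector_eq_top.1 (top_le_iff.1 (hD ▸ affineSpan_le.2 hsub))

variable {E : Type*} [NormedAddCommGroup E] [NormedSpace ℝ E] [FiniteDimensional ℝ E] {Q : Set E}

lemma affineSpan_eq_top_of_dense (hQ : Dense Q) : affineSpan ℝ Q = ⊤ := by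
  have hclosed : IsClosed (affineSpan ℝ Q : Set E) := AffineSubspace.closed_of_finiteDimensional _
  have hsub : closure Q ⊆ affineSpan ℝ Q := hclosed.closure_subset_iff.2 (subset_affineSpan ℝ Q)
  rw [hQ.closure_eq] at hsub
  exact SetLike.coe_injective (univ_subset_iff.1 hsub)

lemma exists_finset_affineSpan_eq_top_of_dense [Nontrivial E] (hQ : Dense Q) (N : ℕ) :
    ∃ A : Finset E, ↑A ⊆ Q ∧ affineSpan ℝ (A : Set E) = ⊤ ∧ N ≤ (A : Set E).encard := by
  classical
  obtain ⟨t, htQ, hspan, hind⟩ := exists_affineIndependent ℝ E Q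
  have hfin : t.Finite := finite_set_of_fin_dim_affineIndependent ℝ hind
  have hinf : Q.Infinite := by
    simpa using infinite_inter_of_dense_of_isOpen hQ isOpen_univ univ_nonempty
  obtain ⟨B, hBQ, hB⟩ := hinf.exists_subset_card_eq N
  refine ⟨hfin.toFinset ∪ B, by simpa using ⟨htQ, hBQ⟩, top_unique ?_,
    ?_⟩
  · rw [← affineSpan_eq_top_of_dense hQ, ← hspan]
    exact affineSpan_mono ℝ (by simp)
  · rw [encard_coe_eq_coe_finsetCard, ← hB]
    exact_mod_cast Finset.card_le_card Finset.subset_union_right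

end AffineSpan

lemma isometry_of_lipschitzWith_one_of_leftInverse {X Y : Type*} [PseudoEMetricSpace X]
    [PseudoEMetricSpace Y] {φ : X → Y} {ψ : Y → X} (hφ : LipschitzWith 1 φ)
    (hψ : LipschitzWith 1 ψ) (h : Function.LeftInverse ψ φ) : Isometry φ := fun x y =>
  le_antisymm (by simpa using hφ x y) (by simpa [h x, h y] using hψ (φ x) (φ y))

theorem stmt_0_general (E : Type*) [NormedAddCommGroup E] [InnerProductSpace ℂ E]
    [FiniteDimensional ℂ E] :
    ∃ D : Set E, IsClosed D ∧ DiscreteTopology D ∧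
      ∀ φ ψ : E → E, Differentiable ℂ φ → Differentiable ℂ ψ →
        Function.LeftInverse ψ φ → Function.RightInverse ψ φ → φ '' D = D → φ = id := by
  rcases subsingleton_or_nontrivial E with _ | _
  · exact ⟨∅, isClosed_empty, inferInstance, fun _ _ _ _ _ _ _ => Subsingleton.elim _ _⟩
  let _ : InnerProductSpace ℝ E := .complexToReal
  have : FiniteDimensional ℝ E := FiniteDimensional.complexToReal E
  obtain ⟨Q, hQ, hdist⟩ := exists_dense_hasDistinctDists E
  obtain ⟨A, hAQ, hspan, hcard⟩ := exists_finset_affineSpan_eq_top_of_dense hQ 3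
  obtain ⟨D, hAD, hDQ, hclosed, hdiscrete, hlip⟩ :=
    exists_isClosed_discreteTopology_forall_lipschitzWith_one hQ hAQ
  refine ⟨D, hclosed, hdiscrete, fun φ ψ hφ hψ hl hr himg => ?_⟩
  have himg' : ψ '' D = D := by simpa only [himg] using hl.image_image D
  have hiso : Isometry φ := isometry_of_lipschitzWith_one_of_leftInverse
    (hlip φ ψ hφ hψ hl himg) (hlip ψ φ hψ hφ hr himg') hl
  have hthree : 2 < D.encard :=
    lt_of_lt_of_le (by norm_num) (hcard.trans (encard_le_encard hAD))
  refine eq_id_of_isometry_of_affineSpan_eq_top hiso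
    (top_unique (hspan ▸ affineSpan_mono ℝ hAD)) fun d hd => ?_
  exact (hdist.mono hDQ).eq_of_isometry hiso (mapsTo_iff_image_subset.2 himg.subset) hthree hd

/-- For every integer `n ≥ 1` there exists a discrete subset `D` of `ℂⁿ` such that the only
automorphism `φ` of `ℂⁿ` (i.e. bijective holomorphic map with holomorphic inverse) satisfying
`φ(D) = D` is the identity map of `ℂⁿ`. -/
theorem stmt_0 (n : ℕ) (hn : 1 ≤ n) :
    ∃ D : Set (EuclideanSpace ℂ (Fin n)),
      IsClosed D ∧ DiscreteTopology D ∧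
      ∀ φ ψ : EuclideanSpace ℂ (Fin n) → EuclideanSpace ℂ (Fin n),
        Differentiable ℂ φ → Differentiable ℂ ψ →
        Function.LeftInverse ψ φ → Function.RightInverse ψ φ →
        φ '' D = D → φ = id := by
  exact stmt_0_general _
end

section
/- For every integer n ≥ 1 there exists a discrete subset D of ℂⁿ such that for every nondegenerate holomorphic map F : ℂⁿ → ℂⁿ the image F(ℂⁿ) has non-empty intersection with D. -/
/-!
Finitely many points of the open shell `r < ‖y‖ < r'` stop every holomorphic `f` on a ball, bounded
by `M`, with `‖f 0‖ ≤ r` and `‖v‖ ≤ ‖Df(0) v‖`, which avoids them: on a given smaller ball such an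
`f` satisfies `‖f x‖ ≤ r'`. Otherwise choose a counterexample for each finite subset of the shell
and take a limit `g` (Montel). It starts in the ball of radius `r` and reaches norm `r'`, so it
enters the shell; as its critical points are nowhere dense (identity theorem), it does so at a
noncritical point `w`. By Hurwitz' theorem the approximating maps take the value `g w`, although
those with large enough index must avoid that point.

Let `D` be the union of such finite sets for the shells `k < ‖y‖ < k + 1`, where `M = k + 2` and
the balls shrink with decreasing `k`, always containing the unit ball. Suppose that `g` is entire
with range disjoint from `D`; composing with an affine map we may take `Dg(0) = id`. If `‖g 0‖ ≤ m`,
then starting from some bound on a compact ball and descending through the shells gives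
`‖g x‖ ≤ m + 1` on the unit ball. This bound does not depend on `g`, so it also holds for
`x ↦ g (c • x)` with `1 ≤ ‖c‖`: hence `g` is bounded, contradicting Liouville's theorem.
-/

open Set Filter Topology Metric

section SchwarzEstimates

theorem mapsTo_ball_closedBall_of_norm_le {X F : Type*} [PseudoMetricSpace X]
    [SeminormedAddCommGroup F] {f : X → F} {x : X} {r M : ℝ} (hM : ∀ y ∈ ball x r, ‖f y‖ ≤ M) :
    MapsTo f (ball x r) (closedBall (f x) (2 * M)) := by
  intro y hy
  have hx : x ∈ ball x r := mem_ball_self (pos_of_mem_ball hy)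
  rw [mem_closedBall, dist_eq_norm]
  linarith [norm_sub_le (f y) (f x), hM y hy, hM x hx]

variable {E F : Type*} [NormedAddCommGroup E] [NormedSpace ℂ E]
  [NormedAddCommGroup F] [NormedSpace ℂ F] {f : E → F} {x : E} {r M : ℝ}

theorem norm_fderiv_le_of_norm_le (hr : 0 < r) (hf : DifferentiableOn ℂ f (ball x r))
    (hM : ∀ y ∈ ball x r, ‖f y‖ ≤ M) : ‖fderiv ℂ f x‖ ≤ 2 * M / r :=
  Complex.norm_fderiv_le_div_of_mapsTo_ball hf (mapsTo_ball_closedBall_of_norm_le hM) hr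

theorem dist_le_mul_dist_of_norm_le (hf : DifferentiableOn ℂ f (ball x r))
    (hM : ∀ y ∈ ball x r, ‖f y‖ ≤ M) {y : E} (hy : y ∈ ball x r) :
    dist (f y) (f x) ≤ 2 * M / r * dist y x :=
  Complex.dist_le_div_mul_dist_of_mapsTo_ball hf (mapsTo_ball_closedBall_of_norm_le hM) hy

end SchwarzEstimates

section LocallyUniformLimits

variable {E F ι : Type*} [NormedAddCommGroup E] [NormedSpace ℂ E]
  [NormedAddCommGroup F] [NormedSpace ℂ F] {f : ι → E → F} {g : E → F} {l : Filter ι} {s : Set E}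

theorem uniformCauchySeqOn_fderiv {δ : ℝ} (hδ : 0 < δ)
    (hd : ∀ᶠ i in l, DifferentiableOn ℂ (f i) (thickening δ s))
    (hf : UniformCauchySeqOn f l (thickening δ s)) :
    UniformCauchySeqOn (fun i => fderiv ℂ (f i)) l s := by
  intro u hu
  obtain ⟨ε, hε, hεu⟩ := mem_uniformity_dist.1 hu
  filter_upwards [hf _ (dist_mem_uniformity (by positivity : 0 < ε * δ / 4)), hd.prod_mk hd]
    with i hi ⟨hd₁, hd₂⟩ x hx
  have hball : ball x δ ⊆ thickening δ s := ball_subset_thickening hx δ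
  have hx' : thickening δ s ∈ 𝓝 x := isOpen_thickening.mem_nhds (hball (mem_ball_self hδ))
  have hcauchy : ‖fderiv ℂ (f i.1 - f i.2) x‖ ≤ 2 * (ε * δ / 4) / δ := by
    refine norm_fderiv_le_of_norm_le hδ ((hd₁.sub hd₂).mono hball) fun y hy => ?_
    simpa [dist_eq_norm] using (hi y (hball hy)).le
  apply hεu
  rw [dist_eq_norm, ← fderiv_sub (hd₁.differentiableAt hx') (hd₂.differentiableAt hx')]
  calc ‖fderiv ℂ (f i.1 - f i.2) x‖ ≤ 2 * (ε * δ / 4) / δ := hcauchy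
    _ = ε / 2 := by field_simp; ring
    _ < ε := half_lt_self hε

theorem exists_hasFDerivAt_of_tendstoLocallyUniformlyOn [ProperSpace E] [CompleteSpace F] [NeBot l]
    (hs : IsOpen s) (hd : ∀ᶠ i in l, DifferentiableOn ℂ (f i) s)
    (hf : TendstoLocallyUniformlyOn f g l s) :
    ∃ g', (∀ x ∈ s, HasFDerivAt g (g' x) x) ∧
      TendstoLocallyUniformlyOn (fun i => fderiv ℂ (f i)) g' l s := by
  have hcauchy : ∀ K ⊆ s, IsCompact K → UniformCauchySeqOn (fun i => fderiv ℂ (f i)) l K := by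
    intro K hKs hK
    obtain ⟨δ, hδ, hδs⟩ := hK.exists_cthickening_subset_open hs hKs
    have hthick : thickening δ K ⊆ cthickening δ K := thickening_subset_cthickening δ K
    exact uniformCauchySeqOn_fderiv hδ (hd.mono fun i hi => hi.mono (hthick.trans hδs))
      (((tendstoLocallyUniformlyOn_iff_forall_isCompact hs).1 hf _ hδs
        hK.cthickening).uniformCauchySeqOn.mono hthick)
  let g' x := limUnder l fun i => fderiv ℂ (f i) x
  have hg' : ∀ x ∈ s, Tendsto (fun i => fderiv ℂ (f i) x) l (𝓝 (g' x)) := fun x hx =>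
    ((hcauchy {x} (singleton_subset_iff.2 hx) isCompact_singleton).cauchy_map rfl).le_nhds_lim
  have hunif : TendstoLocallyUniformlyOn (fun i => fderiv ℂ (f i)) g' l s :=
    (tendstoLocallyUniformlyOn_iff_forall_isCompact hs).2 fun K hKs hK =>
      (hcauchy K hKs hK).tendstoUniformlyOn_of_tendsto fun x hx => hg' x (hKs hx)
  refine ⟨g', fun x hx => ?_, hunif⟩
  refine hasFDerivAt_of_tendstoUniformlyOnFilter (l := l) (f := f) (f' := fun i => fderiv ℂ (f i))
    ?_ ?_ ?_
  · simpa only [hs.nhdsWithin_eq hx] using tendstoLocallyUniformlyOn_iff_filter.1 hunif x hx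
  · filter_upwards [hd.prod_mk (hs.mem_nhds hx)] with i hi
    exact (hi.1.differentiableAt (hs.mem_nhds hi.2)).hasFDerivAt
  · filter_upwards [hs.mem_nhds hx] with y hy using hf.tendsto_at hy

theorem differentiableOn_of_tendstoLocallyUniformlyOn [ProperSpace E] [CompleteSpace F] [NeBot l]
    (hs : IsOpen s) (hd : ∀ᶠ i in l, DifferentiableOn ℂ (f i) s)
    (hf : TendstoLocallyUniformlyOn f g l s) : DifferentiableOn ℂ g s := by
  obtain ⟨g', hderiv, -⟩ := exists_hasFDerivAt_of_tendstoLocallyUniformlyOn hs hd hf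
  exact fun x hx => (hderiv x hx).differentiableAt.differentiableWithinAt

theorem tendstoLocallyUniformlyOn_fderiv [ProperSpace E] [CompleteSpace F] [NeBot l]
    (hs : IsOpen s) (hd : ∀ᶠ i in l, DifferentiableOn ℂ (f i) s)
    (hf : TendstoLocallyUniformlyOn f g l s) :
    TendstoLocallyUniformlyOn (fun i => fderiv ℂ (f i)) (fderiv ℂ g) l s := by
  obtain ⟨g', hderiv, hlim⟩ := exists_hasFDerivAt_of_tendstoLocallyUniformlyOn hs hd hf
  exact hlim.congr_right fun x hx => (hderiv x hx).fderiv.symm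

theorem tendstoLocallyUniformlyOn_of_tendsto [NeBot l] (hs : IsOpen s)
    (hd : ∀ᶠ i in l, DifferentiableOn ℂ (f i) s)
    (hb : ∀ x ∈ s, ∃ t ∈ 𝓝 x, ∃ M, ∀ᶠ i in l, ∀ y ∈ t, ‖f i y‖ ≤ M)
    (hg : ∀ x ∈ s, Tendsto (f · x) l (𝓝 (g x))) :
    TendstoLocallyUniformlyOn f g l s := by
  rw [Metric.tendstoLocallyUniformlyOn_iff]
  intro ε hε x hx
  obtain ⟨t, ht, M, hM⟩ := hb x hx
  obtain ⟨r, hr, hrst⟩ := Metric.mem_nhds_iff.1 (inter_mem (hs.mem_nhds hx) ht)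
  obtain ⟨hrs, hrt⟩ := subset_inter_iff.1 hrst
  have hlip : ∀ᶠ i in l, ∀ y ∈ ball x r, dist (f i y) (f i x) ≤ 2 * M / r * dist y x := by
    filter_upwards [hd, hM] with i hdi hMi y hy
    exact dist_le_mul_dist_of_norm_le (hdi.mono hrs)
      (fun z hz => hMi z (hrt hz)) hy
  have hsmall : ∀ᶠ y in 𝓝 x, 2 * M / r * dist y x < ε / 3 := by
    have : ContinuousAt (fun y => 2 * M / r * dist y x) x := by fun_prop
    exact this.eventually_lt_const (by simpa using by positivity)
  refine ⟨_, mem_nhdsWithin_of_mem_nhds (inter_mem (ball_mem_nhds x hr) hsmall), ?_⟩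
  filter_upwards [hlip, (hg x hx).eventually (ball_mem_nhds _ (by positivity : 0 < ε / 3))]
    with i hi hix y ⟨hyr, hyε⟩
  have hgy : dist (g y) (g x) ≤ 2 * M / r * dist y x :=
    le_of_tendsto ((hg y (hrs hyr)).dist (hg x hx)) (hlip.mono fun j hj => hj y hyr)
  calc dist (g y) (f i y) ≤ dist (g y) (g x) + dist (f i x) (g x) + dist (f i y) (f i x) := by
        rw [dist_comm (f i x) (g x), dist_comm (f i y) (f i x)]
        exact dist_triangle4 _ _ _ _
    _ < ε / 3 + ε / 3 + ε / 3 :=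
        add_lt_add (add_lt_add (hgy.trans_lt hyε) hix) ((hi y hyr).trans_lt hyε)
    _ = ε := by ring

theorem exists_tendstoLocallyUniformlyOn_of_ultrafilter [ProperSpace F] {U : Ultrafilter ι}
    (hs : IsOpen s) (hd : ∀ᶠ i in U, DifferentiableOn ℂ (f i) s)
    (hb : ∀ x ∈ s, ∃ t ∈ 𝓝 x, ∃ M, ∀ᶠ i in U, ∀ y ∈ t, ‖f i y‖ ≤ M) :
    ∃ g, TendstoLocallyUniformlyOn f g U s := by
  have hlim : ∀ x ∈ s, ∃ z, Tendsto (f · x) U (𝓝 z) := by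
    intro x hx
    obtain ⟨t, ht, M, hM⟩ := hb x hx
    have hmem : ∀ᶠ i in U, f i x ∈ closedBall (0 : F) M := by
      filter_upwards [hM] with i hi
      simpa using hi x (mem_of_mem_nhds ht)
    obtain ⟨z, -, hz⟩ := (isCompact_closedBall (0 : F) M).ultrafilter_le_nhds (U.map (f · x))
      (le_principal_iff.2 hmem)
    exact ⟨z, hz⟩
  refine ⟨fun x => limUnder U (f · x), tendstoLocallyUniformlyOn_of_tendsto hs hd hb ?_⟩
  exact fun x hx => tendsto_nhds_limUnder (hlim x hx)

end LocallyUniformLimits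

section Derivatives

variable {E F : Type*} [NormedAddCommGroup E] [NormedSpace ℂ E]
  [NormedAddCommGroup F] [NormedSpace ℂ F] {s : Set E}

theorem norm_slope_le_of_norm_le {f : E → F} {x v : E} {r M : ℝ}
    (hf : DifferentiableOn ℂ f (ball x r)) (hM : ∀ y ∈ ball x r, ‖f y‖ ≤ M) {t : ℂ} (ht : t ≠ 0)
    (htv : x + t • v ∈ ball x r) : ‖t⁻¹ • (f (x + t • v) - f x)‖ ≤ 2 * M / r * ‖v‖ := by
  have hdist := dist_le_mul_dist_of_norm_le hf hM htv
  rw [dist_eq_norm, dist_self_add_left, norm_smul] at hdist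
  rw [norm_smul, norm_inv, inv_mul_le_iff₀ (norm_pos_iff.2 ht)]
  linarith

theorem differentiableOn_fderiv_apply [ProperSpace E] [CompleteSpace F] {f : E → F} (hs : IsOpen s)
    (hf : DifferentiableOn ℂ f s) (v : E) : DifferentiableOn ℂ (fun x => fderiv ℂ f x v) s := by
  intro x hx
  have hdx : DifferentiableAt ℂ f x := hf.differentiableAt (hs.mem_nhds hx)
  have hbound : ∀ᶠ y in 𝓝 x, y ∈ s ∧ ‖f y‖ < ‖f x‖ + 1 :=
    (hs.eventually_mem hx).and (hdx.continuousAt.norm.eventually_lt_const (lt_add_one _))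
  obtain ⟨ρ, hρ, hρs⟩ := Metric.eventually_nhds_iff_ball.1 hbound
  obtain ⟨r, hr, rfl⟩ : ∃ r > 0, ρ = r + r := ⟨ρ / 2, half_pos hρ, (add_halves ρ).symm⟩
  have hball : ∀ y ∈ ball x r, ball y r ⊆ ball x (r + r) := fun y hy =>
    ball_subset_ball' (by gcongr; exact (mem_ball.1 hy).le)
  have hdiff : DifferentiableOn ℂ f (ball x (r + r)) := hf.mono fun y hy => (hρs y hy).1
  have hsmall : ∀ᶠ t : ℂ in 𝓝[≠] 0, t ≠ 0 ∧ ∀ y, y + t • v ∈ ball y r := by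
    have : ContinuousAt (fun t : ℂ => ‖t • v‖) 0 := by fun_prop
    filter_upwards [self_mem_nhdsWithin, nhdsWithin_le_nhds (this.eventually_lt_const
      (by simpa using hr : ‖(0 : ℂ) • v‖ < r))] with t ht htv
    simpa using ⟨ht, htv⟩
  have hq : ∀ᶠ t : ℂ in 𝓝[≠] 0,
      DifferentiableOn ℂ (fun y => t⁻¹ • (f (y + t • v) - f y)) (ball x r) := by
    filter_upwards [hsmall] with t ht
    exact ((hdiff.comp (by fun_prop) fun y hy => hball y hy (ht.2 y)).sub
      (hdiff.mono (ball_subset_ball (by linarith)))).const_smul _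
  have hlim : TendstoLocallyUniformlyOn (fun (t : ℂ) y => t⁻¹ • (f (y + t • v) - f y))
      (fun y => fderiv ℂ f y v) (𝓝[≠] 0) (ball x r) := by
    refine tendstoLocallyUniformlyOn_of_tendsto isOpen_ball hq (fun y hy => ⟨ball x r,
      isOpen_ball.mem_nhds hy, 2 * (‖f x‖ + 1) / r * ‖v‖, ?_⟩) fun y hy => ?_
    · filter_upwards [hsmall] with t ⟨ht0, ht⟩ z hz
      exact norm_slope_le_of_norm_le (hdiff.mono (hball z hz))
        (fun w hw => (hρs w (hball z hz hw)).2.le) ht0 (ht z)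
    · have hy' : ball x (r + r) ∈ 𝓝 y := isOpen_ball.mem_nhds (hball y hy (mem_ball_self hr))
      exact ((hdiff.differentiableAt hy').hasFDerivAt.hasLineDerivAt v).tendsto_slope_zero
  exact ((differentiableOn_of_tendstoLocallyUniformlyOn isOpen_ball hq hlim).differentiableAt
    (ball_mem_nhds x hr)).differentiableWithinAt

theorem continuousOn_fderiv [FiniteDimensional ℂ E] [CompleteSpace F] {f : E → F}
    (hs : IsOpen s) (hf : DifferentiableOn ℂ f s) : ContinuousOn (fderiv ℂ f) s := by
  have : ProperSpace E := FiniteDimensional.proper ℂ E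
  exact continuousOn_clm_apply.2 fun v => (differentiableOn_fderiv_apply hs hf v).continuousOn

theorem differentiableOn_det {𝕜 V : Type*} [NontriviallyNormedField 𝕜] [CompleteSpace 𝕜]
    [NormedAddCommGroup V] [NormedSpace 𝕜 V] [FiniteDimensional 𝕜 V]
    {X : Type*} [NormedAddCommGroup X] [NormedSpace 𝕜 X] {A : X → V →L[𝕜] V} {s : Set X}
    (hA : ∀ v, DifferentiableOn 𝕜 (fun x => A x v) s) :
    DifferentiableOn 𝕜 (fun x => (A x).det) s := by
  let B := Module.finBasis 𝕜 V
  have hentry : ∀ i j, DifferentiableOn 𝕜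
      (fun x => LinearMap.toMatrix B B (A x : V →ₗ[𝕜] V) i j) s := fun i j => by
    simp only [LinearMap.toMatrix_apply]
    exact (LinearMap.toContinuousLinearMap (B.coord i)).differentiable.comp_differentiableOn
      (hA (B j))
  simp only [ContinuousLinearMap.det, ← LinearMap.det_toMatrix B, Matrix.det_apply]
  refine DifferentiableOn.fun_sum fun σ _ => DifferentiableOn.fun_const_smul ?_ _
  exact fun x hx => (HasFDerivWithinAt.finsetProd fun i _ =>
    (hentry (σ i) i x hx).hasFDerivWithinAt).differentiableWithinAt

end Derivatives

section Hurwitz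

variable {E F ι : Type*} [NormedAddCommGroup E] [NormedSpace ℂ E]
  [NormedAddCommGroup F] [NormedSpace ℂ F] {f : ι → E → F} {g : E → F} {l : Filter ι} {s : Set E}

theorem eventually_approximatesLinearOn_of_tendsto_fderiv {𝕜 E F ι : Type*} [RCLike 𝕜]
    [NormedAddCommGroup E] [NormedSpace 𝕜 E] [NormedAddCommGroup F] [NormedSpace 𝕜 F]
    {f : ι → E → F} {A : E →L[𝕜] F} {l : Filter ι} {w : E} {c : NNReal} (hc : 0 < c)
    (hd : ∀ᶠ p : ι × E in l ×ˢ 𝓝 w, DifferentiableAt 𝕜 (f p.1) p.2)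
    (hf' : Tendsto (fun p : ι × E => fderiv 𝕜 (f p.1) p.2) (l ×ˢ 𝓝 w) (𝓝 A)) :
    ∃ r > 0, ∀ᶠ i in l, ApproximatesLinearOn (f i) A (ball w r) c := by
  let _ : NormedSpace ℝ E := NormedSpace.restrictScalars ℝ 𝕜 E
  obtain ⟨P, hP, Q, hQ, hPQ⟩ := eventually_prod_iff.1
    (hd.and (hf'.eventually (closedBall_mem_nhds A (NNReal.coe_pos.2 hc))))
  obtain ⟨r, hr, hrQ⟩ := Metric.eventually_nhds_iff_ball.1 hQ
  refine ⟨r, hr, hP.mono fun i hi => ?_⟩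
  exact fun y hy z hz => (convex_ball w r).norm_image_sub_le_of_norm_fderiv_le'
    (fun u hu => (hPQ hi (hrQ u hu)).1)
    (fun u hu => mem_closedBall_iff_norm.1 (hPQ hi (hrQ u hu)).2) hz hy

theorem eventually_mem_image_of_tendsto_fderiv {𝕜 E F ι : Type*} [RCLike 𝕜]
    [NormedAddCommGroup E] [NormedSpace 𝕜 E] [CompleteSpace E]
    [NormedAddCommGroup F] [NormedSpace 𝕜 F] [CompleteSpace F]
    {f : ι → E → F} {A : E →L[𝕜] F} {l : Filter ι} {w : E} {z : F} {s : Set E} (hs : s ∈ 𝓝 w)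
    (hd : ∀ᶠ p : ι × E in l ×ˢ 𝓝 w, DifferentiableAt 𝕜 (f p.1) p.2)
    (hf' : Tendsto (fun p : ι × E => fderiv 𝕜 (f p.1) p.2) (l ×ˢ 𝓝 w) (𝓝 A))
    (hA : Function.Surjective A) (hf : Tendsto (f · w) l (𝓝 z)) :
    ∀ᶠ i in l, z ∈ f i '' s := by
  obtain ⟨B, hB⟩ := A.exists_nonlinearRightInverse_of_surjective (LinearMap.range_eq_top.2 hA)
  obtain ⟨r, hr, happrox⟩ := eventually_approximatesLinearOn_of_tendsto_fderiv
    (half_pos (inv_pos.2 hB)) hd hf'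
  obtain ⟨ε, hε, hεrs⟩ := nhds_basis_closedBall.mem_iff.1 (inter_mem (ball_mem_nhds w hr) hs)
  obtain ⟨hεr, hεs⟩ := subset_inter_iff.1 hεrs
  have hradius : 0 < ((B.nnnorm : ℝ)⁻¹ - (B.nnnorm⁻¹ / 2 : NNReal)) * ε := by
    push_cast
    rw [sub_half]
    positivity
  filter_upwards [happrox, hf.eventually (ball_mem_nhds z hradius)] with i hi hiz
  exact image_mono hεs ((hi.surjOn_closedBall_of_nonlinearRightInverse B hε.le hεr)
    (by rw [mem_closedBall, dist_comm]; exact (mem_ball.1 hiz).le))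

theorem eventually_mem_image_of_tendstoLocallyUniformlyOn [FiniteDimensional ℂ E] [CompleteSpace F]
    [NeBot l] (hs : IsOpen s) (hd : ∀ᶠ i in l, DifferentiableOn ℂ (f i) s)
    (hf : TendstoLocallyUniformlyOn f g l s) {w : E} (hw : w ∈ s)
    (hsurj : Function.Surjective (fderiv ℂ g w)) : ∀ᶠ i in l, g w ∈ f i '' s := by
  have : ProperSpace E := FiniteDimensional.proper ℂ E
  have hs' : s ∈ 𝓝 w := hs.mem_nhds hw
  have hcont : Tendsto (fderiv ℂ g) (𝓝 w) (𝓝 (fderiv ℂ g w)) := (continuousOn_fderiv hs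
    (differentiableOn_of_tendstoLocallyUniformlyOn hs hd hf)).continuousAt hs'
  have hunif := tendstoLocallyUniformlyOn_iff_filter.1
    (tendstoLocallyUniformlyOn_fderiv hs hd hf) w hw
  rw [hs.nhdsWithin_eq hw, tendstoUniformlyOnFilter_iff_tendsto] at hunif
  have hjoint : Tendsto (fun p : ι × E => fderiv ℂ (f p.1) p.2) (l ×ˢ 𝓝 w) (𝓝 (fderiv ℂ g w)) :=
    (hcont.comp tendsto_snd).congr_uniformity hunif
  refine eventually_mem_image_of_tendsto_fderiv hs' ?_ hjoint hsurj (hf.tendsto_at hw)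
  filter_upwards [hd.prod_mk hs'] with p hp
  exact hp.1.differentiableAt (hs.mem_nhds hp.2)

end Hurwitz

section IdentityTheorem

theorem eqOn_zero_of_eventuallyEq_zero {E F : Type*} [NormedAddCommGroup E] [NormedSpace ℂ E]
    [NormedAddCommGroup F] [NormedSpace ℂ F] [CompleteSpace F] {f : E → F} {s : Set E} {x : E}
    (hs : IsOpen s) (hc : Convex ℝ s) (hf : DifferentiableOn ℂ f s) (hx : x ∈ s)
    (hfx : f =ᶠ[𝓝 x] 0) : EqOn f 0 s := by
  intro y hy
  let γ : ℂ → E := fun t => x + t • (y - x)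
  have hγ : Differentiable ℂ γ := by fun_prop
  have hopen : IsOpen (γ ⁻¹' s) := hs.preimage hγ.continuous
  have hconv : Convex ℝ (γ ⁻¹' s) := (hc.translate_preimage_right x).linear_preimage
    ((LinearMap.toSpanSingleton ℂ E (y - x)).restrictScalars ℝ)
  have hγ0 : γ 0 = x := by simp [γ]
  have hγ1 : γ 1 = y := by simp [γ]
  have han : AnalyticOnNhd ℂ (f ∘ γ) (γ ⁻¹' s) :=
    (hf.comp hγ.differentiableOn (mapsTo_preimage γ s)).analyticOnNhd hopen
  have h0 : f ∘ γ =ᶠ[𝓝 0] 0 := (hγ.continuous.tendsto' 0 x hγ0).eventually hfx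
  simpa [hγ1] using han.eqOn_zero_of_preconnected_of_eventuallyEq_zero hconv.isPreconnected
    (show γ 0 ∈ s by rwa [hγ0]) h0 (show γ 1 ∈ s by rwa [hγ1])

theorem subset_closure_setOf_bijective_fderiv {V : Type*} [NormedAddCommGroup V] [NormedSpace ℂ V]
    [FiniteDimensional ℂ V] {g : V → V} {s : Set V} {x : V} (hs : IsOpen s) (hc : Convex ℝ s)
    (hg : DifferentiableOn ℂ g s) (hx : x ∈ s) (hgx : Function.Bijective (fderiv ℂ g x)) :
    s ⊆ closure {w | Function.Bijective (fderiv ℂ g w)} := by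
  have : ProperSpace V := FiniteDimensional.proper ℂ V
  have hdet : ∀ w, Function.Bijective (fderiv ℂ g w) ↔ (fderiv ℂ g w).det ≠ 0 := fun w => by
    rw [← isUnit_iff_ne_zero, ContinuousLinearMap.det, ← LinearMap.isUnit_iff_isUnit_det,
      Module.End.isUnit_iff]
    rfl
  have hdiff : DifferentiableOn ℂ (fun w => (fderiv ℂ g w).det) s :=
    differentiableOn_det (differentiableOn_fderiv_apply hs hg)
  intro w hw
  by_contra hcl
  have hzero : (fun w => (fderiv ℂ g w).det) =ᶠ[𝓝 w] 0 := by
    filter_upwards [isClosed_closure.isOpen_compl.mem_nhds hcl] with y hy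
    by_contra hne
    exact hy (subset_closure ((hdet y).2 hne))
  exact (hdet x).1 hgx (eqOn_zero_of_eventuallyEq_zero hs hc hdiff hw hzero hx)

end IdentityTheorem

section NormalizedMaps

variable {V : Type*} [NormedAddCommGroup V] [NormedSpace ℂ V]

/-- The holomorphic maps on the ball of radius `a` which are bounded by `M`, send `0` into the
closed ball of radius `r` and whose derivative at `0` does not decrease norms. The last condition
is a nondegeneracy condition that survives locally uniform limits. -/
structure IsNormalizedOnBall (f : V → V) (a r M : ℝ) : Prop where
  differentiableOn : DifferentiableOn ℂ f (ball 0 a)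
  norm_le : ∀ x ∈ ball 0 a, ‖f x‖ ≤ M
  norm_zero_le : ‖f 0‖ ≤ r
  norm_le_norm_fderiv : ∀ v, ‖v‖ ≤ ‖fderiv ℂ f 0 v‖

variable [FiniteDimensional ℂ V]

namespace IsNormalizedOnBall

variable {ι : Type*} {f : ι → V → V} {g : V → V} {l : Filter ι} {a r r' M : ℝ}

theorem of_tendstoLocallyUniformlyOn [NeBot l] (ha : 0 < a)
    (hf : ∀ᶠ i in l, IsNormalizedOnBall (f i) a r M)
    (hlim : TendstoLocallyUniformlyOn f g l (ball 0 a)) : IsNormalizedOnBall g a r M := by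
  have : ProperSpace V := FiniteDimensional.proper ℂ V
  have hd : ∀ᶠ i in l, DifferentiableOn ℂ (f i) (ball 0 a) :=
    hf.mono fun i hi => hi.differentiableOn
  have h0 : (0 : V) ∈ ball 0 a := mem_ball_self ha
  refine ⟨differentiableOn_of_tendstoLocallyUniformlyOn isOpen_ball hd hlim, fun x hx => ?_, ?_,
    fun v => ?_⟩
  · exact le_of_tendsto (hlim.tendsto_at hx).norm (hf.mono fun i hi => hi.norm_le x hx)
  · exact le_of_tendsto (hlim.tendsto_at h0).norm (hf.mono fun i hi => hi.norm_zero_le)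
  · have hderiv : Tendsto (fun i => fderiv ℂ (f i) 0) l (𝓝 (fderiv ℂ g 0)) :=
      (tendstoLocallyUniformlyOn_fderiv isOpen_ball hd hlim).tendsto_at h0
    exact ge_of_tendsto (((ContinuousLinearMap.apply ℂ V v).continuous.tendsto _).comp hderiv).norm
      (hf.mono fun i hi => hi.norm_le_norm_fderiv v)

theorem bijective_fderiv_zero (hg : IsNormalizedOnBall g a r M) :
    Function.Bijective (fderiv ℂ g 0) := by
  have hinj : Function.Injective (fderiv ℂ g 0) :=
    (injective_iff_map_eq_zero _).2 fun v hv => by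
      simpa [hv] using hg.norm_le_norm_fderiv v
  exact ⟨hinj, LinearMap.injective_iff_surjective.1 hinj⟩

theorem exists_mem_shell_bijective_fderiv (hg : IsNormalizedOnBall g a r M) (hr : r < r') {p : V}
    (hp : p ∈ ball 0 a) (hgp : r' ≤ ‖g p‖) :
    ∃ w ∈ ball 0 a, g w ∈ ball 0 r' \ closedBall 0 r ∧ Function.Bijective (fderiv ℂ g w) := by
  have h0 : (0 : V) ∈ ball 0 a := mem_ball_self (pos_of_mem_ball hp)
  obtain ⟨c, hrc, hcr'⟩ := exists_between hr
  obtain ⟨q, hq, hgq⟩ := (convex_ball (0 : V) a).isPreconnected.intermediate_value h0 hp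
    hg.differentiableOn.continuousOn.norm ⟨hg.norm_zero_le.trans hrc.le, hcr'.le.trans hgp⟩
  have hopen : IsOpen (ball 0 a ∩ g ⁻¹' (ball 0 r' \ closedBall 0 r)) :=
    hg.differentiableOn.continuousOn.isOpen_inter_preimage isOpen_ball
      (isOpen_ball.sdiff isClosed_closedBall)
  have hmem : q ∈ ball 0 a ∩ g ⁻¹' (ball 0 r' \ closedBall 0 r) :=
    ⟨hq, by simpa [hgq] using ⟨hcr', hrc⟩⟩
  obtain ⟨w, ⟨hwa, hw⟩, hbij⟩ := mem_closure_iff.1 (subset_closure_setOf_bijective_fderiv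
    isOpen_ball (convex_ball 0 a) hg.differentiableOn h0 hg.bijective_fderiv_zero hq) _ hopen hmem
  exact ⟨w, hwa, hw, hbij⟩

theorem exists_finite_forall_norm_le {b : ℝ} (hba : b < a) (hr : r < r') (M : ℝ) :
    ∃ T : Set V, T.Finite ∧ T ⊆ ball 0 r' \ closedBall 0 r ∧
      ∀ f : V → V, IsNormalizedOnBall f a r M → Disjoint (f '' ball 0 a) T →
        ∀ x ∈ closedBall 0 b, ‖f x‖ ≤ r' := by
  have : ProperSpace V := FiniteDimensional.proper ℂ V
  by_contra! hcontra
  let S : Set V := ball 0 r' \ closedBall 0 r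
  have hT : ∀ T : Finset S, ∃ f : V → V, IsNormalizedOnBall f a r M ∧
      Disjoint (f '' ball 0 a) ((↑) '' (T : Set S)) ∧ ∃ x ∈ closedBall 0 b, r' < ‖f x‖ := fun T =>
    hcontra _ (T.finite_toSet.image _) (Subtype.coe_image_subset S _)
  choose f hf hdisj x hxb hx using hT
  let U : Ultrafilter (Finset S) := Ultrafilter.of atTop
  obtain ⟨g, hlim⟩ : ∃ g, TendstoLocallyUniformlyOn f g U (ball 0 a) :=
    exists_tendstoLocallyUniformlyOn_of_ultrafilter isOpen_ball
      (.of_forall fun T => (hf T).differentiableOn) fun y hy =>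
        ⟨_, isOpen_ball.mem_nhds hy, M, .of_forall fun T => (hf T).norm_le⟩
  obtain ⟨p, hpb, hp⟩ := (isCompact_closedBall (0 : V) b).ultrafilter_le_nhds (U.map x)
    (le_principal_iff.2 (Eventually.of_forall hxb : ∀ᶠ T in U, x T ∈ closedBall 0 b))
  have hpa : p ∈ ball 0 a := closedBall_subset_ball hba hpb
  have hg : IsNormalizedOnBall g a r M :=
    of_tendstoLocallyUniformlyOn (pos_of_mem_ball hpa) (.of_forall hf) hlim
  have hgp : Tendsto (fun T => f T (x T)) U (𝓝 (g p)) := by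
    refine hlim.tendsto_comp (hg.differentiableOn.continuousOn p hpa) hpa ?_
    rwa [isOpen_ball.nhdsWithin_eq hpa]
  obtain ⟨w, hwa, hw, hbij⟩ := hg.exists_mem_shell_bijective_fderiv hr hpa
    (ge_of_tendsto hgp.norm (.of_forall fun T => (hx T).le))
  have hmem : ∀ᶠ T in U, g w ∈ f T '' ball 0 a :=
    eventually_mem_image_of_tendstoLocallyUniformlyOn isOpen_ball
      (.of_forall fun T => (hf T).differentiableOn) hlim hwa hbij.surjective
  have hsub : ∀ᶠ T : Finset S in U, {⟨g w, hw⟩} ≤ T := Ultrafilter.of_le _ (eventually_ge_atTop _)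
  obtain ⟨T, hT, hle⟩ := (hmem.and hsub).exists
  exact disjoint_left.1 (hdisj T) hT ⟨⟨g w, hw⟩, hle (Finset.mem_singleton_self _), rfl⟩

end IsNormalizedOnBall

end NormalizedMaps

section Discreteness

theorem isClosed_and_isDiscrete_iUnion_of_locallyFinite {X ι : Type*} [TopologicalSpace X]
    [T1Space X] {T : ι → Set X} (hT : LocallyFinite T) (hfin : ∀ i, (T i).Finite) :
    IsClosed (⋃ i, T i) ∧ IsDiscrete (⋃ i, T i) := by
  refine isClosed_and_discrete_iff.2 fun x => disjoint_principal_right.2 ?_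
  have hclosed : IsClosed (⋃ i, T i \ {x}) :=
    (hT.subset fun i => sdiff_subset).isClosed_iUnion fun i =>
      ((hfin i).subset sdiff_subset).isClosed
  filter_upwards [self_mem_nhdsWithin, nhdsWithin_le_nhds (hclosed.isOpen_compl.mem_nhds
    (show x ∉ ⋃ i, T i \ {x} by simp))] with y hyx hy hyT
  rw [← iUnion_sdiff] at hy
  exact hy ⟨hyT, hyx⟩

theorem locallyFinite_of_forall_le_norm {E : Type*} [SeminormedAddCommGroup E] {T : ℕ → Set E}
    (hT : ∀ k, ∀ y ∈ T k, k ≤ ‖y‖) : LocallyFinite T := by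
  refine fun x => ⟨ball x 1, ball_mem_nhds x one_pos, (finite_Iic ⌊‖x‖ + 1⌋₊).subset ?_⟩
  rintro k ⟨y, hyT, hy⟩
  have hyx : ‖y‖ - ‖x‖ < 1 := (norm_sub_norm_le y x).trans_lt (mem_ball_iff_norm.1 hy)
  exact Nat.le_floor (by linarith [hT k y hyT])

end Discreteness

section UnavoidableSets

variable {V : Type*} [NormedAddCommGroup V] [NormedSpace ℂ V] [FiniteDimensional ℂ V]

theorem norm_le_of_forall_isNormalizedOnBall {a : ℕ → ℝ} {R : ℝ} {g : V → V} {m : ℕ}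
    (haR : ∀ k, a k ≤ R) (hg : Differentiable ℂ g) (hg' : ∀ v, ‖v‖ ≤ ‖fderiv ℂ g 0 v‖)
    (hm : ‖g 0‖ ≤ m) (hstep : ∀ k : ℕ, IsNormalizedOnBall g (a (k + 1)) k (k + 2) →
      ∀ x ∈ closedBall 0 (a k), ‖g x‖ ≤ k + 1) :
    ∀ x ∈ closedBall 0 (a m), ‖g x‖ ≤ m + 1 := by
  have : ProperSpace V := FiniteDimensional.proper ℂ V
  obtain ⟨B, hB⟩ := (isCompact_closedBall (0 : V) R).exists_bound_of_continuousOn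
    hg.continuous.continuousOn
  obtain ⟨K, hmK, hBK⟩ : ∃ K ≥ m, B ≤ K :=
    ((eventually_ge_atTop m).and (tendsto_natCast_atTop_atTop.eventually_ge_atTop B)).exists
  refine Nat.decreasingInduction' (P := fun k => ∀ x ∈ closedBall 0 (a k), ‖g x‖ ≤ k + 1)
    (fun k _ hmk ih => ?_) hmK fun x hx => ?_
  · have hk : (m : ℝ) ≤ k := Nat.cast_le.2 hmk
    refine hstep k ⟨hg.differentiableOn, fun x hx => ?_, hm.trans hk, hg'⟩
    have := ih x (ball_subset_closedBall hx)
    push_cast at this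
    linarith
  · linarith [hB x (closedBall_subset_closedBall (haR K) hx)]

variable (V) in
theorem exists_isClosed_isDiscrete_forall_norm_le :
    ∃ D : Set V, IsClosed D ∧ IsDiscrete D ∧ ∀ g : V → V, Differentiable ℂ g →
      (∀ v, ‖v‖ ≤ ‖fderiv ℂ g 0 v‖) → Disjoint (range g) D → ∀ m : ℕ, ‖g 0‖ ≤ m →
        ∀ x ∈ closedBall 0 1, ‖g x‖ ≤ m + 1 := by
  obtain ⟨a, hmono, ha, -⟩ := exists_seq_strictMono_tendsto' (one_lt_two (α := ℝ))
  choose T hfin hshell hT using fun k : ℕ =>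
    IsNormalizedOnBall.exists_finite_forall_norm_le (V := V) (hmono k.lt_succ_self)
      (lt_add_one (k : ℝ)) (k + 2)
  have hnorm : ∀ k, ∀ y ∈ T k, k ≤ ‖y‖ := fun k y hy => by
    simpa using (not_le.1 (mt mem_closedBall_zero_iff.2 (hshell k hy).2)).le
  obtain ⟨hclosed, hdiscrete⟩ :=
    isClosed_and_isDiscrete_iUnion_of_locallyFinite (locallyFinite_of_forall_le_norm hnorm) hfin
  refine ⟨⋃ k, T k, hclosed, hdiscrete, fun g hg hg' hdisj m hm x hx => ?_⟩
  have hdisj' : ∀ k, Disjoint (g '' ball 0 (a (k + 1))) (T k) := fun k =>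
    hdisj.mono (image_subset_range _ _) (subset_iUnion T k)
  exact norm_le_of_forall_isNormalizedOnBall (fun k => (ha k).2.le) hg hg' hm
    (fun k hk => hT k g hk (hdisj' k)) x (closedBall_subset_closedBall (ha m).1.le hx)

theorem isBounded_range_of_forall_comp_smul {𝕜 E F : Type*} [RCLike 𝕜] [NormedAddCommGroup E]
    [NormedSpace 𝕜 E] [SeminormedAddCommGroup F] {g : E → F} {C : ℝ}
    (hC : ∀ c : 𝕜, 1 ≤ ‖c‖ → ∀ x ∈ closedBall (0 : E) 1, ‖g (c • x)‖ ≤ C) :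
    Bornology.IsBounded (range g) := by
  refine isBounded_iff_forall_norm_le.2 ⟨C, forall_mem_range.2 fun y => ?_⟩
  let c : 𝕜 := ((max 1 ‖y‖ : ℝ) : 𝕜)
  have hc : ‖c‖ = max 1 ‖y‖ := RCLike.norm_of_nonneg (by positivity)
  have hc0 : c ≠ 0 := norm_pos_iff.1 (by rw [hc]; positivity)
  have hmem : c⁻¹ • y ∈ closedBall (0 : E) 1 := by
    rw [mem_closedBall_zero_iff, norm_smul, norm_inv, hc, inv_mul_le_iff₀ (by positivity), mul_one]
    exact le_max_right _ _
  simpa [smul_inv_smul₀ hc0] using hC c (hc ▸ le_max_left _ _) _ hmem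

variable (V) in
theorem exists_isClosed_isDiscrete_forall_range_inter_nonempty [Nontrivial V] :
    ∃ D : Set V, IsClosed D ∧ IsDiscrete D ∧ ∀ g : V → V, Differentiable ℂ g →
      fderiv ℂ g 0 = ContinuousLinearMap.id ℂ V → (range g ∩ D).Nonempty := by
  obtain ⟨D, hclosed, hdiscrete, hD⟩ := exists_isClosed_isDiscrete_forall_norm_le V
  refine ⟨D, hclosed, hdiscrete, fun g hg hg' => not_disjoint_iff_nonempty_inter.1 fun hdisj => ?_⟩
  obtain ⟨m, hm⟩ := exists_nat_ge ‖g 0‖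
  have hbounded : Bornology.IsBounded (range g) := by
    refine isBounded_range_of_forall_comp_smul (𝕜 := ℂ) (C := m + 1) fun c hc => ?_
    refine hD (fun x => g (c • x)) (by fun_prop) (fun v => ?_)
      (hdisj.mono_left (range_comp_subset_range _ g)) m (by simpa using hm)
    rw [fderiv_comp_smul, smul_zero, hg']
    simpa [norm_smul] using le_mul_of_one_le_left (norm_nonneg v) hc
  obtain ⟨c, rfl⟩ := hg.exists_eq_const_of_bounded hbounded
  obtain ⟨v, hv⟩ := exists_ne (0 : V)
  exact hv (by simpa using (DFunLike.congr_fun hg' v).symm)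

end UnavoidableSets

theorem stmt_1_general {E F : Type*} [NormedAddCommGroup E] [NormedSpace ℂ E]
    [NormedAddCommGroup F] [NormedSpace ℂ F] [FiniteDimensional ℂ F] [Nontrivial F] :
    ∃ D : Set F, IsClosed D ∧ DiscreteTopology D ∧ ∀ f : E → F, Differentiable ℂ f →
      (∃ x, Function.Surjective (fderiv ℂ f x)) → (range f ∩ D).Nonempty := by
  obtain ⟨D, hclosed, hdiscrete, hD⟩ := exists_isClosed_isDiscrete_forall_range_inter_nonempty F
  refine ⟨D, hclosed, hdiscrete.to_subtype, fun f hf ⟨x, hx⟩ => ?_⟩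
  obtain ⟨L, hL⟩ :=
    (fderiv ℂ f x).exists_rightInverse_of_surjective (LinearMap.range_eq_top.2 hx)
  have hderiv : fderiv ℂ (fun y => f (x + L y)) 0 = ContinuousLinearMap.id ℂ F := by
    have hf' : HasFDerivAt f (fderiv ℂ f x) (x + L 0) := by simpa using (hf x).hasFDerivAt
    exact (hf'.comp 0 (L.hasFDerivAt.const_add x)).fderiv.trans hL
  exact (hD _ (by fun_prop) hderiv).mono
    (inter_subset_inter_left D (range_comp_subset_range (fun y => x + L y) f))

/-- For every integer `n ≥ 1` there exists a discrete subset `D` of `ℂⁿ` such that for every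
nondegenerate holomorphic map `F : ℂⁿ → ℂⁿ` (i.e. whose derivative is invertible at some point)
the image `F(ℂⁿ)` has non-empty intersection with `D`. -/
theorem stmt_1 (n : ℕ) (hn : 1 ≤ n) :
    ∃ D : Set (EuclideanSpace ℂ (Fin n)),
      IsClosed D ∧ DiscreteTopology D ∧
      ∀ F : EuclideanSpace ℂ (Fin n) → EuclideanSpace ℂ (Fin n),
        Differentiable ℂ F →
        (∃ x, Function.Bijective (fderiv ℂ F x)) →
        (Set.range F ∩ D).Nonempty := by
  have : Nonempty (Fin n) := ⟨⟨0, hn⟩⟩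
  obtain ⟨D, hclosed, hdiscrete, hD⟩ := stmt_1_general (E := EuclideanSpace ℂ (Fin n))
    (F := EuclideanSpace ℂ (Fin n))
  exact ⟨D, hclosed, hdiscrete, fun F hF ⟨x, hx⟩ => hD F hF ⟨x, hx.surjective⟩⟩
end
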